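/- arXiv:2503.05903 — 2 statements merged into one kernel-verified Lean document; each statement's English description precedes it below -/
import Mathlib

section
/- Let n∈ℕ, p∈(1,2], s∈(0,1), and write p' = p/(p−1). Let Ω⊆ℝⁿ be a bounded open set, f∈L^{p'}_loc(Ω), and let B_{2R}(x_o) have closure contained in Ω. Let u:ℝⁿ→ℝ be a local weak solution of (−Δ_p)^s u = f in Ω, and let v:ℝⁿ→ℝ be a local weak solution of (−Δ_p)^s v = 0 in B_R(x_o) with v∈L^p(B_R(x_o)), [v]_{W^{s,p}(B_R(x_o))}<∞ and v = u a.e. in ℝⁿ∖B_R(x_o). Set w := u−v. Then there exists a constant c = c(n,p,s) such that for every δ∈(0,1] one has ∬_{B_{2R}(x_o)×B_{2R}(x_o)} |w(x)−w(y)|^p/|x−y|^{n+sp} dx dy ≤ δ ∬_{B_{2R}(x_o)×B_{2R}(x_o)} |u(x)−u(y)|^p/|x−y|^{n+sp} dx dy + c δ^{−(2−p)/(p−1)} R^{sp'} ∫_{B_R(x_o)} |f|^{p'} dx. -/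
open MeasureTheory Metric Set
open scoped ENNReal

noncomputable section

/-- Double Gagliardo integral `∬_{D×D} |u(x)-u(y)|^p / |x-y|^{n+sp} dx dy` in `ℝ≥0∞`. -/
def gagliardoE (n : ℕ) (s p : ℝ) (D : Set (EuclideanSpace ℝ (Fin n)))
    (u : EuclideanSpace ℝ (Fin n) → ℝ) : ℝ≥0∞ :=
  ∫⁻ x in D, ∫⁻ y in D, ENNReal.ofReal (|u x - u y| ^ p / dist x y ^ ((n : ℝ) + s * p))

/-- Nonlocal tail `Tail(u; B_R(x₀))` in `ℝ≥0∞`. -/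
def tailE (n : ℕ) (s p : ℝ) (u : EuclideanSpace ℝ (Fin n) → ℝ)
    (x₀ : EuclideanSpace ℝ (Fin n)) (R : ℝ) : ℝ≥0∞ :=
  (ENNReal.ofReal (R ^ (s * p)) *
      ∫⁻ x in (ball x₀ R)ᶜ,
        ENNReal.ofReal (|u x| ^ (p - 1) / dist x x₀ ^ ((n : ℝ) + s * p))) ^ (1 / (p - 1))

/-- `f ∈ L^q_loc(D)`. -/
def MemLploc (n : ℕ) (q : ℝ) (D : Set (EuclideanSpace ℝ (Fin n)))
    (f : EuclideanSpace ℝ (Fin n) → ℝ) : Prop :=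
  Measurable f ∧
    ∀ K : Set (EuclideanSpace ℝ (Fin n)), K ⊆ D → IsCompact K →
      (∫⁻ x in K, ENNReal.ofReal (|f x| ^ q)) < ⊤

/-- `u` is a local weak solution of `(-Δ_p)^s u = f` in `D`. -/
def IsLocalWeakSolution (n : ℕ) (p s : ℝ) (D : Set (EuclideanSpace ℝ (Fin n)))
    (f u : EuclideanSpace ℝ (Fin n) → ℝ) : Prop :=
  Measurable u ∧
  (∀ K : Set (EuclideanSpace ℝ (Fin n)), K ⊆ D → IsCompact K →
      (∫⁻ x in K, ENNReal.ofReal (|u x| ^ p)) < ⊤ ∧ gagliardoE n s p K u < ⊤) ∧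
  (∫⁻ x, ENNReal.ofReal (|u x| ^ (p - 1) / (1 + ‖x‖) ^ ((n : ℝ) + s * p))) < ⊤ ∧
  ∀ φ : EuclideanSpace ℝ (Fin n) → ℝ, Measurable φ →
    (∃ K : Set (EuclideanSpace ℝ (Fin n)), IsCompact K ∧ K ⊆ D ∧
      ∀ᵐ x, x ∉ K → φ x = 0) →
    (∫⁻ x, ENNReal.ofReal (|φ x| ^ p)) < ⊤ →
    gagliardoE n s p Set.univ φ < ⊤ →
    (∫ x, ∫ y,
        |u x - u y| ^ (p - 2) * (u x - u y) * (φ x - φ y) / dist x y ^ ((n : ℝ) + s * p)) =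
      ∫ x in D, f x * φ x

/-- The signed `γ`-power `𝐚^γ = |a|^{γ-1} a`. -/
def sgnPow (γ a : ℝ) : ℝ := |a| ^ (γ - 1) * a

namespace CompFrac

/-- The nonlinearity `|a|^{p-2} a`. -/
def Jp (p a : ℝ) : ℝ := |a| ^ (p - 2) * a

lemma Jp_neg (p a : ℝ) : Jp p (-a) = - Jp p a := by simp [Jp]

lemma Jp_of_nonneg {p a : ℝ} (hp : 1 < p) (ha : 0 ≤ a) : Jp p a = a ^ (p - 1) := by
  rcases ha.eq_or_lt with rfl | h
  · simp [Jp, Real.zero_rpow (by linarith : p - 1 ≠ 0)]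
  · rw [Jp, abs_of_pos h, ← Real.rpow_add_one h.ne']; ring_nf

lemma abs_Jp {p : ℝ} (hp : 1 < p) (a : ℝ) : |Jp p a| = |a| ^ (p - 1) := by
  have h1 : |Jp p a| = |a| ^ (p - 2) * |a| := by
    rw [Jp, abs_mul, abs_of_nonneg (Real.rpow_nonneg (abs_nonneg a) _)]
  have h2 := Jp_of_nonneg hp (abs_nonneg a)
  rw [Jp, abs_abs] at h2
  rw [h1, h2]

/-- Strong monotonicity for `b ≤ a`, `0 ≤ b`. -/
lemma mono_same {p a b : ℝ} (hp : 1 < p) (hp2 : p ≤ 2) (hb : 0 ≤ b) (hab : b < a) :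
    (p - 1) * (|a| + |b|) ^ (p - 2) * (a - b) ^ 2 ≤ (Jp p a - Jp p b) * (a - b) := by
  have ha : 0 < a := lt_of_le_of_lt hb hab
  rw [Jp_of_nonneg hp ha.le, Jp_of_nonneg hp hb, abs_of_pos ha, abs_of_nonneg hb]
  have h1 : (a + b) ^ (p - 2) ≤ a ^ (p - 2) :=
    Real.rpow_le_rpow_of_nonpos ha (by linarith) (by linarith)
  have h2 : b ^ (p - 1) ≤ a ^ (p - 1) + (p - 1) * a ^ (p - 2) * (b - a) := by
    have h3 := rpow_one_add_le_one_add_mul_self (s := b / a - 1)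
      (by have : 0 ≤ b / a := by positivity
          linarith) (p := p - 1) (by linarith) (by linarith)
    have h4 : (1 + (b / a - 1)) = b / a := by ring
    rw [h4, Real.div_rpow hb ha.le, div_le_iff₀ (Real.rpow_pos_of_pos ha _)] at h3
    refine h3.trans (le_of_eq ?_)
    have h5 : a ^ (p - 1) = a ^ (p - 2) * a := by
      rw [← Real.rpow_add_one ha.ne']; ring_nf
    rw [h5]; field_simp
  have h6 : (p - 1) * a ^ (p - 2) * (a - b) ≤ a ^ (p - 1) - b ^ (p - 1) := by linarith
  calc (p - 1) * (a + b) ^ (p - 2) * (a - b) ^ 2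
      ≤ (p - 1) * a ^ (p - 2) * (a - b) ^ 2 := by
        gcongr
    _ = ((p - 1) * a ^ (p - 2) * (a - b)) * (a - b) := by ring
    _ ≤ _ := by
        gcongr

lemma mono_opp {p a b : ℝ} (hp : 1 < p) (hp2 : p ≤ 2) (hb : b ≤ 0) (ha : 0 ≤ a) (hab : b < a) :
    (p - 1) * (|a| + |b|) ^ (p - 2) * (a - b) ^ 2 ≤ (Jp p a - Jp p b) * (a - b) := by
  obtain ⟨c, rfl⟩ : ∃ c, b = -c := ⟨-b, by ring⟩
  have hc : 0 ≤ c := by linarith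
  have hpos : 0 < a + c := by linarith
  rw [Jp_neg, Jp_of_nonneg hp ha, Jp_of_nonneg hp hc, abs_neg, abs_of_nonneg ha, abs_of_nonneg hc]
  have h := Real.rpow_add_le_add_rpow ha hc (by linarith : 0 ≤ p - 1) (by linarith)
  have h5 : (a + c) ^ (p - 1) = (a + c) ^ (p - 2) * (a + c) := by
    rw [← Real.rpow_add_one hpos.ne']; ring_nf
  have h6 : 0 ≤ (a + c) ^ (p - 2) := by positivity
  have h7 : (p - 1) * ((a + c) ^ (p - 2) * (a + c)) ≤ 1 * ((a + c) ^ (p - 2) * (a + c)) := by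
    gcongr; linarith
  calc (p - 1) * (a + c) ^ (p - 2) * (a - -c) ^ 2
      = ((p - 1) * ((a + c) ^ (p - 2) * (a + c))) * (a + c) := by ring
    _ ≤ (a ^ (p - 1) + c ^ (p - 1)) * (a + c) := by
        gcongr
        linarith
    _ = _ := by ring

lemma mono {p : ℝ} (hp : 1 < p) (hp2 : p ≤ 2) (a b : ℝ) :
    (p - 1) * (|a| + |b|) ^ (p - 2) * (a - b) ^ 2 ≤ (Jp p a - Jp p b) * (a - b) := by
  have key : ∀ a b : ℝ, b < a →
      (p - 1) * (|a| + |b|) ^ (p - 2) * (a - b) ^ 2 ≤ (Jp p a - Jp p b) * (a - b) := by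
    intro a b hab
    rcases le_total 0 b with hb | hb
    · exact mono_same hp hp2 hb hab
    · rcases le_total 0 a with ha | ha
      · exact mono_opp hp hp2 hb ha hab
      · have := mono_same (a := -b) (b := -a) hp hp2 (by linarith) (by linarith)
        rw [Jp_neg, Jp_neg, abs_neg, abs_neg] at this
        rw [add_comm (|a|)]
        calc _ = (p - 1) * (|b| + |a|) ^ (p - 2) * (-b - -a) ^ 2 := by ring
          _ ≤ _ := this
          _ = _ := by ring
  rcases lt_trichotomy a b with h | rfl | h
  · have := key b a h
    rw [add_comm (|a|)]
    calc _ = (p - 1) * (|b| + |a|) ^ (p - 2) * (b - a) ^ 2 := by ring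
      _ ≤ _ := this
      _ = _ := by ring
  · simp
  · exact key a b h

lemma mono_nonneg {p : ℝ} (hp : 1 < p) (hp2 : p ≤ 2) (a b : ℝ) :
    0 ≤ (Jp p a - Jp p b) * (a - b) :=
  le_trans (by have : 0 ≤ p - 1 := by linarith
               positivity) (mono hp hp2 a b)

/-- Key pointwise inequality. -/
lemma key_ptwise {p δ : ℝ} (hp : 1 < p) (hp2 : p ≤ 2) (hδ : 0 < δ) (hδ1 : δ ≤ 1) (a b : ℝ) :
    |a - b| ^ p ≤ δ * |a| ^ p +
      3 / (p - 1) * δ ^ (-((2 - p) / p)) * ((Jp p a - Jp p b) * (a - b)) := by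
  have hp0 : 0 < p := by linarith
  have hp1 : 0 < p - 1 := by linarith
  have hm := mono hp hp2 a b
  have hm0 := mono_nonneg hp hp2 a b
  by_cases h : |a - b| ^ p ≤ δ * |a| ^ p
  · have : 0 ≤ 3 / (p - 1) * δ ^ (-((2 - p) / p)) * ((Jp p a - Jp p b) * (a - b)) := by positivity
    linarith
  push Not at h
  have hw : 0 < |a - b| := by
    by_contra h0
    have h0' : |a - b| = 0 := le_antisymm (not_lt.1 h0) (abs_nonneg _)
    rw [h0', Real.zero_rpow hp0.ne'] at h
    have : 0 ≤ δ * |a| ^ p := by positivity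
    linarith
  set τ := δ ^ (-(1 / p)) with hτ
  have hτ1 : 1 ≤ τ := Real.one_le_rpow_of_pos_of_le_one_of_nonpos hδ hδ1
    (by have : 0 < 1 / p := by positivity
        linarith)
  have hτ0 : 0 < τ := by linarith
  have ha : |a| ≤ τ * |a - b| := by
    have h1 : (|a|) ^ p ≤ (τ * |a - b|) ^ p := by
      rw [Real.mul_rpow hτ0.le hw.le, hτ, ← Real.rpow_mul hδ.le,
        show -(1 / p) * p = -1 by field_simp, Real.rpow_neg_one]
      rw [inv_mul_eq_div, le_div_iff₀ hδ]; linarith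
    exact (Real.rpow_le_rpow_iff (abs_nonneg _) (by positivity) hp0).1 h1
  have hb : |b| ≤ |a| + |a - b| := by
    have := abs_sub_abs_le_abs_sub b a
    rw [abs_sub_comm] at this; linarith
  have hs : |a| + |b| ≤ 3 * τ * |a - b| := by nlinarith
  have hs0 : 0 < |a| + |b| := by
    have := abs_sub a b
    linarith
  have h2 : (3 * τ * |a - b|) ^ (p - 2) ≤ (|a| + |b|) ^ (p - 2) :=
    Real.rpow_le_rpow_of_nonpos hs0 hs (by linarith)
  have h3 : (3 * τ * |a - b|) ^ (p - 2) * (a - b) ^ 2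
      = (3:ℝ) ^ (p - 2) * δ ^ ((2 - p) / p) * |a - b| ^ p := by
    rw [Real.mul_rpow (by positivity) hw.le, Real.mul_rpow (by norm_num) hτ0.le, hτ,
      ← Real.rpow_mul hδ.le, ← sq_abs (a - b), mul_assoc _ (|a - b| ^ (p - 2)),
      show -(1 / p) * (p - 2) = (2 - p) / p by ring]
    congr 1
    rw [← Real.rpow_natCast, ← Real.rpow_add hw]; norm_num
  have h4 : (1:ℝ) / 3 ≤ (3:ℝ) ^ (p - 2) := by
    rw [one_div, ← Real.rpow_neg_one]
    exact Real.rpow_le_rpow_of_exponent_le (by norm_num) (by linarith)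
  have h5 : (p - 1) * (1 / 3 * δ ^ ((2 - p) / p) * |a - b| ^ p) ≤ (Jp p a - Jp p b) * (a - b) := by
    calc _ ≤ (p - 1) * ((3:ℝ) ^ (p - 2) * δ ^ ((2 - p) / p) * |a - b| ^ p) := by gcongr
      _ = (p - 1) * ((3 * τ * |a - b|) ^ (p - 2) * (a - b) ^ 2) := by rw [h3]
      _ ≤ (p - 1) * ((|a| + |b|) ^ (p - 2) * (a - b) ^ 2) := by gcongr
      _ ≤ _ := by rw [← mul_assoc]; exact hm
  have h6 : δ ^ (-((2 - p) / p)) * δ ^ ((2 - p) / p) = 1 := by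
    rw [← Real.rpow_add hδ]; simp
  calc |a - b| ^ p = 3 / (p - 1) * δ ^ (-((2 - p) / p)) *
        ((p - 1) * (1 / 3 * δ ^ ((2 - p) / p) * |a - b| ^ p)) := by
          have aux : ∀ A B X : ℝ, 3 / (p - 1) * A * ((p - 1) * (1 / 3 * B * X)) = (A * B) * X := by
            intro A B X; field_simp
          rw [aux, h6, one_mul]
    _ ≤ 3 / (p - 1) * δ ^ (-((2 - p) / p)) * ((Jp p a - Jp p b) * (a - b)) := by gcongr
    _ ≤ _ := by
      have : 0 ≤ δ * |a| ^ p := by positivity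
      linarith

/-- Young type inequality. -/
lemma young {p μ a b : ℝ} (hp : 1 < p) (hμ : 0 < μ) (ha : 0 ≤ a) (hb : 0 ≤ b) :
    a ^ (p - 1) * b ≤ μ * a ^ p + μ ^ (-(p - 1)) * b ^ p := by
  have e : ∀ t : ℝ, 0 ≤ t → t ^ (p - 1) * t = t ^ p := by
    intro t ht
    rcases ht.eq_or_lt with rfl | h
    · simp [Real.zero_rpow (by linarith : p ≠ 0)]
    · rw [← Real.rpow_add_one h.ne']; ring_nf
  rcases le_total b (μ * a) with h | h
  · calc a ^ (p - 1) * b ≤ a ^ (p - 1) * (μ * a) := by gcongr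
      _ = μ * a ^ p := by rw [← e a ha]; ring
      _ ≤ _ := by
        have : 0 ≤ μ ^ (-(p - 1)) * b ^ p := by positivity
        linarith
  · have h1 : a ≤ b / μ := by rw [le_div_iff₀ hμ]; linarith
    calc a ^ (p - 1) * b ≤ (b / μ) ^ (p - 1) * b := by
          gcongr
      _ = μ ^ (-(p - 1)) * b ^ p := by
          rw [← e b hb, Real.div_rpow hb hμ.le, Real.rpow_neg hμ.le]; field_simp
      _ ≤ _ := by
        have : 0 ≤ μ * a ^ p := by positivity
        linarith

lemma add_rpow_le {p a b : ℝ} (hp : 1 < p) (hp2 : p ≤ 2) (ha : 0 ≤ a) (hb : 0 ≤ b) :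
    (a + b) ^ p ≤ 4 * (a ^ p + b ^ p) := by
  have key : ∀ a b : ℝ, 0 ≤ a → a ≤ b → (a + b) ^ p ≤ 4 * (a ^ p + b ^ p) := by
    intro a b ha hab
    have hb : 0 ≤ b := ha.trans hab
    calc (a + b) ^ p ≤ (2 * b) ^ p := by
          apply Real.rpow_le_rpow <;> linarith
      _ = 2 ^ p * b ^ p := Real.mul_rpow (by norm_num) hb
      _ ≤ 2 ^ (2:ℝ) * b ^ p := by
          gcongr
          norm_num
      _ ≤ _ := by
          have : 0 ≤ a ^ p := by positivity
          norm_num; linarith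
  rcases le_total a b with h | h
  · exact key a b ha h
  · have := key b a hb h
    rw [add_comm a, add_comm (a ^ p)]; exact this

lemma abs_sub_rpow_le {p : ℝ} (hp : 1 < p) (hp2 : p ≤ 2) (a b : ℝ) :
    |a - b| ^ p ≤ 4 * (|a| ^ p + |b| ^ p) :=
  (Real.rpow_le_rpow (abs_nonneg _) (abs_sub a b) (by linarith)).trans
    (add_rpow_le hp hp2 (abs_nonneg _) (abs_nonneg _))

/-- One dimensional cutoff profile. -/
def tcut (ε d : ℝ) : ℝ := 1 - ε / max d ε

lemma tcut_nonneg {ε : ℝ} (hε : 0 < ε) (d : ℝ) : 0 ≤ tcut ε d := by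
  have : ε / max d ε ≤ 1 := by
    rw [div_le_one (lt_of_lt_of_le hε (le_max_right _ _))]; exact le_max_right _ _
  unfold tcut; linarith

lemma tcut_le_one {ε : ℝ} (hε : 0 < ε) (d : ℝ) : tcut ε d ≤ 1 := by
  have : 0 ≤ ε / max d ε := div_nonneg hε.le (hε.le.trans (le_max_right _ _))
  unfold tcut; linarith

lemma tcut_eq_zero {ε d : ℝ} (hε : 0 < ε) (hd : d ≤ ε) : tcut ε d = 0 := by
  simp [tcut, max_eq_right hd, hε.ne']

lemma tcut_mono {ε a b : ℝ} (hε : 0 < ε) (hab : b ≤ a) : tcut ε b ≤ tcut ε a := by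
  unfold tcut
  have : 0 < max b ε := lt_of_lt_of_le hε (le_max_right _ _)
  gcongr

lemma tcut_diff {ε a b : ℝ} (hε : 0 < ε) (ha : 0 < a) (hab : b ≤ a) :
    tcut ε a - tcut ε b ≤ (a - b) / a := by
  rcases le_total a ε with h | h
  · rw [tcut_eq_zero hε h, tcut_eq_zero hε (hab.trans h)]
    simp only [sub_self]
    exact div_nonneg (by linarith) ha.le
  · unfold tcut
    rw [max_eq_left h]
    have hM : ε ≤ max b ε := le_max_right _ _
    have hM' : b ≤ max b ε := le_max_left _ _
    have hM'' : max b ε ≤ a := max_le hab h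
    set M := max b ε
    have hM0 : 0 < M := by linarith
    rw [show 1 - ε / a - (1 - ε / M) = (ε / M) * ((a - M) / a) by field_simp; ring]
    have h1 : ε / M ≤ 1 := by rw [div_le_one hM0]; exact hM
    calc (ε / M) * ((a - M) / a) ≤ 1 * ((a - M) / a) := by
          gcongr
      _ ≤ (a - b) / a := by rw [one_mul]; gcongr

/-- Cutoff profile raised to the power `p'`. -/
def ecut (p ε d : ℝ) : ℝ := (tcut ε d) ^ (p / (p - 1))

lemma ecut_nonneg {p ε : ℝ} (hε : 0 < ε) (d : ℝ) : 0 ≤ ecut p ε d :=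
  Real.rpow_nonneg (tcut_nonneg hε d) _

lemma ecut_le_one {p ε : ℝ} (hp : 1 < p) (hε : 0 < ε) (d : ℝ) : ecut p ε d ≤ 1 :=
  Real.rpow_le_one (tcut_nonneg hε d) (tcut_le_one hε d)
    (div_nonneg (by linarith) (by linarith))

lemma ecut_eq_zero {p ε d : ℝ} (hp : 1 < p) (hε : 0 < ε) (hd : d ≤ ε) : ecut p ε d = 0 := by
  rw [ecut, tcut_eq_zero hε hd, Real.zero_rpow]
  exact (div_pos (by linarith) (by linarith)).ne'

lemma ecut_mono {p ε a b : ℝ} (hp : 1 < p) (hε : 0 < ε) (hab : b ≤ a) :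
    ecut p ε b ≤ ecut p ε a :=
  Real.rpow_le_rpow (tcut_nonneg hε b) (tcut_mono hε hab) (div_nonneg (by linarith) (by linarith))

lemma ecut_rpow_le {p ε : ℝ} (hp : 1 < p) (hε : 0 < ε) (d : ℝ) : ecut p ε d ^ p ≤ ecut p ε d := by
  rcases (ecut_nonneg (p := p) hε d).eq_or_lt with h | h
  · rw [← h, Real.zero_rpow (by linarith)]
  · calc ecut p ε d ^ p ≤ ecut p ε d ^ (1:ℝ) :=
        Real.rpow_le_rpow_of_exponent_ge h (ecut_le_one hp hε d) hp.le
      _ = _ := Real.rpow_one _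

lemma ecut_diff {p ε a b r : ℝ} (hp : 1 < p) (hε : 0 < ε) (ha : 0 < a) (hab : b ≤ a)
    (hr : a - b ≤ r) :
    (ecut p ε a - ecut p ε b) ^ p ≤ (p / (p - 1)) ^ p * (ecut p ε a * (min 1 (r / a)) ^ p) := by
  have hp1 : 0 < p - 1 := by linarith
  have hp0 : 0 < p := by linarith
  set q := p / (p - 1) with hq
  have hq1 : 1 ≤ q := by rw [hq, le_div_iff₀ hp1]; linarith
  have hmono := ecut_mono hp hε hab
  have hm0 : 0 ≤ min 1 (r / a) := le_min zero_le_one (div_nonneg (by linarith) ha.le)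
  rcases (tcut_nonneg hε a).eq_or_lt with h0 | h0
  · have h1 : ecut p ε a = 0 := by
      rw [ecut, ← h0, Real.zero_rpow]; positivity
    have h2 : ecut p ε b = 0 := le_antisymm (h1 ▸ hmono) (ecut_nonneg hε b)
    rw [h1, h2]; simp [Real.zero_rpow hp0.ne']
  set T := tcut ε a
  set S := tcut ε b with hS
  have hS0 : 0 ≤ S := tcut_nonneg hε b
  have hST : S ≤ T := tcut_mono hε hab
  have hT1 : T ≤ 1 := tcut_le_one hε a
  -- difference bound
  have hd : T - S ≤ r / a := (tcut_diff hε ha hab).trans (by gcongr)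
  have hd1 : T - S ≤ 1 := by linarith
  have hB : T ^ q - S ^ q ≤ q * T ^ (q - 1) * (T - S) := by
    have h3 := one_add_mul_self_le_rpow_one_add (s := S / T - 1)
      (by have : 0 ≤ S / T := by positivity
          linarith) hq1
    rw [show 1 + (S / T - 1) = S / T by ring, Real.div_rpow hS0 h0.le,
      le_div_iff₀ (Real.rpow_pos_of_pos h0 _)] at h3
    have h5 : T ^ q = T ^ (q - 1) * T := by rw [← Real.rpow_add_one h0.ne']; ring_nf
    have h6 : (1 + q * (S / T - 1)) * T ^ q = T ^ q - q * T ^ (q - 1) * (T - S) := by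
      rw [h5]; field_simp; ring
    rw [h6] at h3; linarith
  have hB' : T ^ q - S ^ q ≤ q * T ^ (q - 1) * min 1 (r / a) :=
    hB.trans (by gcongr; exact le_min hd1 hd)
  have hqp : (q - 1) * p = q := by rw [hq]; field_simp; ring
  calc (ecut p ε a - ecut p ε b) ^ p ≤ (q * T ^ (q - 1) * min 1 (r / a)) ^ p :=
        Real.rpow_le_rpow (by linarith) hB' hp0.le
    _ = q ^ p * (T ^ q * (min 1 (r / a)) ^ p) := by
        rw [Real.mul_rpow (by positivity) hm0, Real.mul_rpow (by positivity) (by positivity),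
          ← Real.rpow_mul h0.le, hqp]; ring
    _ = _ := rfl

end CompFrac

namespace CompFrac

/-- The singular kernel. -/
def kr (n : ℕ) (s p : ℝ) (z : EuclideanSpace ℝ (Fin n) × EuclideanSpace ℝ (Fin n)) : ℝ :=
  (dist z.1 z.2 ^ ((n : ℝ) + s * p))⁻¹

/-- The singular measure. -/
def nu (n : ℕ) (s p : ℝ) : Measure (EuclideanSpace ℝ (Fin n) × EuclideanSpace ℝ (Fin n)) :=
  (volume.prod volume).withDensity (fun z => ((kr n s p z).toNNReal : ℝ≥0∞))

lemma kr_nonneg {n : ℕ} {s p : ℝ} (z : EuclideanSpace ℝ (Fin n) × EuclideanSpace ℝ (Fin n)) :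
    0 ≤ kr n s p z := by unfold kr; positivity

lemma kr_meas (n : ℕ) (s p : ℝ) : Measurable (kr n s p) := by
  unfold kr; fun_prop

lemma kr_swap {n : ℕ} {s p : ℝ} (z : EuclideanSpace ℝ (Fin n) × EuclideanSpace ℝ (Fin n)) :
    kr n s p z.swap = kr n s p z := by simp [kr, dist_comm]

lemma nu_prod {n : ℕ} {s p : ℝ} {A B : Set (EuclideanSpace ℝ (Fin n))}
    (hA : MeasurableSet A) (hB : MeasurableSet B)
    {F : EuclideanSpace ℝ (Fin n) × EuclideanSpace ℝ (Fin n) → ℝ≥0∞} (hF : Measurable F) :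
    ∫⁻ z in A ×ˢ B, F z ∂(nu n s p) =
      ∫⁻ x in A, ∫⁻ y in B, ENNReal.ofReal (kr n s p (x, y)) * F (x, y) := by
  have hk : Measurable (fun z => ((kr n s p z).toNNReal : ℝ≥0∞)) :=
    (kr_meas n s p).real_toNNReal.coe_nnreal_ennreal
  rw [nu, restrict_withDensity (hA.prod hB), lintegral_withDensity_eq_lintegral_mul _ hk hF,
    setLIntegral_prod _ (hk.mul hF).aemeasurable]
  rfl

lemma nu_swap {n : ℕ} {s p : ℝ} {A B : Set (EuclideanSpace ℝ (Fin n))}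
    (hA : MeasurableSet A) (hB : MeasurableSet B)
    {F : EuclideanSpace ℝ (Fin n) × EuclideanSpace ℝ (Fin n) → ℝ≥0∞} (hF : Measurable F) :
    ∫⁻ z in A ×ˢ B, F z ∂(nu n s p) = ∫⁻ z in B ×ˢ A, F z.swap ∂(nu n s p) := by
  rw [nu_prod hA hB hF, nu_prod (F := fun z => F z.swap) hB hA (hF.comp measurable_swap)]
  have hk := ENNReal.measurable_ofReal.comp (kr_meas n s p)
  rw [lintegral_lintegral_swap]
  · refine lintegral_congr fun x => lintegral_congr fun y => ?_
    rw [← kr_swap]; rfl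
  · exact (hk.mul hF).aemeasurable

lemma gag_meas {n : ℕ} {p : ℝ} {u : EuclideanSpace ℝ (Fin n) → ℝ} (hu : Measurable u) :
    Measurable (fun z : EuclideanSpace ℝ (Fin n) × EuclideanSpace ℝ (Fin n) =>
      ENNReal.ofReal (|u z.1 - u z.2| ^ p)) := by
  fun_prop

lemma gag_eq {n : ℕ} {s p : ℝ} {D : Set (EuclideanSpace ℝ (Fin n))} (hD : MeasurableSet D)
    {u : EuclideanSpace ℝ (Fin n) → ℝ} (hu : Measurable u) :
    gagliardoE n s p D u =
      ∫⁻ z in D ×ˢ D, ENNReal.ofReal (|u z.1 - u z.2| ^ p) ∂(nu n s p) := by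
  rw [nu_prod hD hD (gag_meas hu), gagliardoE]
  refine lintegral_congr fun x => lintegral_congr fun y => ?_
  rw [← ENNReal.ofReal_mul (kr_nonneg _), div_eq_inv_mul]; rfl

/-- Splitting of the whole integral of a function vanishing on `Bᶜ × Bᶜ`. -/
lemma nu_split {n : ℕ} {s p : ℝ} {B : Set (EuclideanSpace ℝ (Fin n))} (hB : MeasurableSet B)
    {F : EuclideanSpace ℝ (Fin n) × EuclideanSpace ℝ (Fin n) → ℝ≥0∞} (hF : Measurable F)
    (hs : ∀ z, F z.swap = F z) (h0 : ∀ z, z.1 ∉ B → z.2 ∉ B → F z = 0) :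
    ∫⁻ z, F z ∂(nu n s p) =
      ∫⁻ z in B ×ˢ B, F z ∂(nu n s p) + 2 * ∫⁻ z in B ×ˢ Bᶜ, F z ∂(nu n s p) := by
  have e1 : ∫⁻ z, F z ∂(nu n s p) = ∫⁻ z in B ×ˢ univ, F z ∂(nu n s p)
      + ∫⁻ z in Bᶜ ×ˢ univ, F z ∂(nu n s p) := by
    rw [← lintegral_add_compl F (hB.prod MeasurableSet.univ)]
    congr 3
    ext z; simp
  have e2 : ∀ A : Set (EuclideanSpace ℝ (Fin n)), MeasurableSet A →
      ∫⁻ z in A ×ˢ univ, F z ∂(nu n s p) = ∫⁻ z in A ×ˢ B, F z ∂(nu n s p)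
      + ∫⁻ z in A ×ˢ Bᶜ, F z ∂(nu n s p) := by
    intro A hA
    rw [← lintegral_union (hA.prod hB.compl)]
    · congr 2
      rw [← prod_union, union_compl_self]
    · exact Disjoint.set_prod_right disjoint_compl_right _ _
  have e3 : ∫⁻ z in Bᶜ ×ˢ Bᶜ, F z ∂(nu n s p) = 0 := by
    rw [setLIntegral_congr_fun (g := fun _ => 0) (hB.compl.prod hB.compl)]
    · simp
    · rintro z ⟨h1, h2⟩
      exact h0 z h1 h2
  have e4 : ∫⁻ z in Bᶜ ×ˢ B, F z ∂(nu n s p) = ∫⁻ z in B ×ˢ Bᶜ, F z ∂(nu n s p) := by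
    rw [nu_swap hB.compl hB hF]
    simp_rw [hs]
  rw [e1, e2 B hB, e2 Bᶜ hB.compl, e3, e4, add_zero, two_mul, add_assoc]

lemma radial_finite (n : ℕ) (hn : 0 < n) (p s : ℝ) (hp : 1 < p) (hs : 0 < s) (hs1 : s < 1) :
    ∫⁻ z : EuclideanSpace ℝ (Fin n),
      ENNReal.ofReal ((min 1 ‖z‖) ^ p * (‖z‖ ^ ((n : ℝ) + s * p))⁻¹) < ⊤ := by
  have : Nonempty (Fin n) := ⟨⟨0, hn⟩⟩
  have hp0 : 0 < p := by linarith
  have hsp : 0 < s * p := by positivity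
  have hsp1 : s * p < p := by nlinarith
  have hI : Integrable (fun z : EuclideanSpace ℝ (Fin n) =>
      (fun r : ℝ => (min 1 r) ^ p * (r ^ ((n : ℝ) + s * p))⁻¹) ‖z‖) volume := by
    refine (integrable_fun_norm_addHaar (F := ℝ) (volume : Measure (EuclideanSpace ℝ (Fin n)))
      (f := fun r : ℝ => (min 1 r) ^ p * (r ^ ((n : ℝ) + s * p))⁻¹)).2 ?_
    rw [show Ioi (0:ℝ) = Ioc 0 1 ∪ Ioi 1 from (Ioc_union_Ioi_eq_Ioi zero_le_one).symm]
    have hfin : Module.finrank ℝ (EuclideanSpace ℝ (Fin n)) = n := by simp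
    rw [hfin]
    have hpw : ∀ r : ℝ, 0 < r → r ^ (n - 1) * (r ^ ((n : ℝ) + s * p))⁻¹ = r ^ (-1 - s * p) := by
      intro r hr
      rw [← Real.rpow_natCast, ← Real.rpow_neg hr.le, ← Real.rpow_add hr]
      congr 1
      rw [Nat.cast_sub hn]; push_cast; ring
    refine IntegrableOn.union ?_ ?_
    · have : IntegrableOn (fun r : ℝ => r ^ (p - 1 - s * p)) (Ioc 0 1) := by
        rw [← intervalIntegrable_iff_integrableOn_Ioc_of_le zero_le_one]
        exact intervalIntegral.intervalIntegrable_rpow' (by linarith)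
      refine this.congr_fun ?_ measurableSet_Ioc
      rintro r ⟨h0, h1⟩
      simp only [smul_eq_mul]
      rw [min_eq_right h1, mul_left_comm, hpw r h0, ← Real.rpow_add h0]
      congr 1; ring
    · have : IntegrableOn (fun r : ℝ => r ^ (-1 - s * p)) (Ioi 1) :=
        integrableOn_Ioi_rpow_of_lt (by linarith) one_pos
      refine this.congr_fun ?_ measurableSet_Ioi
      intro r h1
      have h1' : (1:ℝ) < r := h1
      simp only [smul_eq_mul]
      rw [min_eq_left h1'.le, Real.one_rpow, one_mul, hpw r (by linarith)]
  exact hI.lintegral_lt_top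

/-- Upper bound for the truncated kernel integral. -/
lemma ker_upper (n : ℕ) (hn : 0 < n) (p s : ℝ) (hp : 1 < p) (hs : 0 < s) (hs1 : s < 1) :
    ∃ C : ℝ, 0 < C ∧ ∀ (x : EuclideanSpace ℝ (Fin n)) (r : ℝ), 0 < r →
      ∫⁻ y, ENNReal.ofReal (kr n s p (x, y)) * ENNReal.ofReal ((min 1 (dist x y / r)) ^ p)
        ≤ ENNReal.ofReal (C * r ^ (-(s * p))) := by
  set I := ∫⁻ z : EuclideanSpace ℝ (Fin n),
      ENNReal.ofReal ((min 1 ‖z‖) ^ p * (‖z‖ ^ ((n : ℝ) + s * p))⁻¹) with hI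
  have hIf : I < ⊤ := radial_finite n hn p s hp hs hs1
  refine ⟨I.toReal + 1, by positivity, fun x r hr => ?_⟩
  set h : EuclideanSpace ℝ (Fin n) → ℝ≥0∞ := fun z =>
      ENNReal.ofReal ((min 1 ‖z‖) ^ p * (‖z‖ ^ ((n : ℝ) + s * p))⁻¹) with hh
  have hhm : Measurable h := by rw [hh]; fun_prop
  have e1 : ∀ y, ENNReal.ofReal (kr n s p (x, y)) * ENNReal.ofReal ((min 1 (dist x y / r)) ^ p)
      = ENNReal.ofReal (r ^ (-((n:ℝ) + s * p))) * h (r⁻¹ • (y - x)) := by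
    intro y
    rw [hh, ← ENNReal.ofReal_mul (kr_nonneg _), ← ENNReal.ofReal_mul (by positivity)]
    congr 1
    simp only [kr]
    rw [norm_smul, Real.norm_of_nonneg (inv_nonneg.2 hr.le), ← dist_eq_norm, dist_comm y x,
      show r⁻¹ * dist x y = dist x y / r from (div_eq_inv_mul _ _).symm, Real.div_rpow dist_nonneg hr.le, Real.rpow_neg hr.le]
    have : r ^ ((n:ℝ) + s * p) ≠ 0 := by positivity
    rw [inv_div]
    field_simp
  simp_rw [e1]
  rw [lintegral_const_mul _ (by fun_prop)]
  have e2 : ∫⁻ y, h (r⁻¹ • (y - x)) = ENNReal.ofReal (r ^ (n:ℝ)) * I := by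
    rw [lintegral_sub_right_eq_self (fun y => h (r⁻¹ • y)) x]
    have := lintegral_map (μ := volume) hhm (measurable_const_smul (r⁻¹))
    rw [← this, Measure.map_addHaar_smul _ (inv_ne_zero hr.ne'), lintegral_smul_measure]
    congr 2
    rw [abs_of_pos (by positivity)]; simp
  rw [e2, ← mul_assoc, ← ENNReal.ofReal_mul (by positivity), ← Real.rpow_add hr,
    mul_comm (I.toReal + 1), ENNReal.ofReal_mul (by positivity)]
  rw [show -((n:ℝ) + s * p) + n = -(s * p) by ring]
  gcongr
  rw [← ENNReal.ofReal_toReal hIf.ne]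
  exact ENNReal.ofReal_le_ofReal (by simp)

/-- Lower bound for the exterior kernel integral. -/
lemma ker_lower (n : ℕ) (hn : 0 < n) (p s : ℝ) (hp : 1 < p) (hs : 0 < s) :
    ∃ c : ℝ, 0 < c ∧ ∀ (x₀ x : EuclideanSpace ℝ (Fin n)) (R : ℝ), x ∈ ball x₀ R →
      ENNReal.ofReal (c * (R - dist x x₀) ^ (-(s * p))) ≤
      ∫⁻ y in ball x₀ (2 * R) \ ball x₀ R, ENNReal.ofReal (kr n s p (x, y)) := by
  have : Nonempty (Fin n) := ⟨⟨0, hn⟩⟩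
  have hsp : 0 < s * p := by have : 0 < p := by linarith
                             positivity
  set ω := (volume (ball (0 : EuclideanSpace ℝ (Fin n)) 1)) with hω
  have hω0 : 0 < ω := measure_ball_pos _ _ one_pos
  have hωt : ω < ⊤ := measure_ball_lt_top
  have hωr : 0 < ω.toReal := ENNReal.toReal_pos hω0.ne' hωt.ne
  refine ⟨ω.toReal * ((1/2) ^ (n:ℝ) * 2 ^ (-((n:ℝ) + s * p))), by positivity,
    fun x₀ x R hx => ?_⟩
  rw [mem_ball] at hx
  set d := R - dist x x₀ with hd
  have hd0 : 0 < d := by linarith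
  have hdR : d ≤ R := by have := dist_nonneg (x := x) (y := x₀); linarith
  obtain ⟨e, he, hex⟩ : ∃ e : EuclideanSpace ℝ (Fin n), ‖e‖ = 1 ∧ x - x₀ = (dist x x₀) • e := by
    by_cases hxx : x = x₀
    · obtain ⟨e, he⟩ := exists_norm_eq (EuclideanSpace ℝ (Fin n)) zero_le_one
      exact ⟨e, he, by simp [hxx]⟩
    · have h0 : ‖x - x₀‖ ≠ 0 := by rwa [norm_ne_zero_iff, sub_ne_zero]
      refine ⟨(‖x - x₀‖)⁻¹ • (x - x₀), ?_, ?_⟩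
      · rw [norm_smul, norm_inv, norm_norm, inv_mul_cancel₀ h0]
      · rw [dist_eq_norm, smul_smul, mul_inv_cancel₀ h0, one_smul]
  set c := x₀ + (R + d / 2) • e with hc
  have hcx₀ : dist c x₀ = R + d / 2 := by
    rw [hc, dist_eq_norm, add_sub_cancel_left, norm_smul, he, mul_one, Real.norm_of_nonneg]
    linarith
  have hcx : dist c x = 3 / 2 * d := by
    have : c - x = (3 / 2 * d) • e := by
      have hx' : x = x₀ + (dist x x₀) • e := by rw [← hex]; abel
      have h2 : c - x = (R + d / 2) • e - (dist x x₀) • e := by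
        rw [hc]; nth_rewrite 1 [hx']; abel
      rw [h2, ← sub_smul]; congr 1; rw [hd]; ring
    rw [dist_eq_norm, this, norm_smul, he, mul_one, Real.norm_of_nonneg]
    linarith
  have hsub : ball c (d / 2) ⊆ ball x₀ (2 * R) \ ball x₀ R := by
    intro y hy
    rw [mem_ball] at hy
    refine ⟨?_, ?_⟩
    · rw [mem_ball]
      have := dist_triangle y c x₀
      linarith
    · rw [mem_ball, not_lt]
      have := dist_triangle c y x₀
      rw [dist_comm c y] at this
      linarith
  calc ENNReal.ofReal (ω.toReal * ((1/2) ^ (n:ℝ) * 2 ^ (-((n:ℝ) + s * p))) * d ^ (-(s * p)))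
      = ENNReal.ofReal ((2 * d) ^ (-((n:ℝ) + s * p))) * volume (ball c (d / 2)) := by
        rw [Measure.addHaar_ball _ _ (by positivity), ← hω]
        nth_rewrite 2 [← ENNReal.ofReal_toReal hωt.ne]
        rw [← ENNReal.ofReal_mul (by positivity), ← ENNReal.ofReal_mul (by positivity)]
        congr 1
        have hfin : Module.finrank ℝ (EuclideanSpace ℝ (Fin n)) = n := by simp
        rw [hfin, ← Real.rpow_natCast, Real.mul_rpow (by norm_num) hd0.le,
          show d / 2 = (1/2) * d by ring, Real.mul_rpow (by norm_num) hd0.le]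
        have : d ^ (-(s * p)) = d ^ (-((n:ℝ) + s * p)) * d ^ (n:ℝ) := by
          rw [← Real.rpow_add hd0]; congr 1; ring
        rw [this]; ring
    _ = ∫⁻ y in ball c (d / 2), ENNReal.ofReal ((2 * d) ^ (-((n:ℝ) + s * p))) := by
        rw [setLIntegral_const]
    _ ≤ ∫⁻ y in ball c (d / 2), ENNReal.ofReal (kr n s p (x, y)) := by
        refine setLIntegral_mono' measurableSet_ball fun y hy => ?_
        apply ENNReal.ofReal_le_ofReal
        rw [mem_ball] at hy
        have h1 : dist x y ≤ 2 * d := by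
          have := dist_triangle y c x
          rw [dist_comm x y]; linarith
        have h2 : 0 < dist x y := by
          have := dist_triangle c y x
          rw [dist_comm x y]; rw [dist_comm c y] at this; linarith
        simp only [kr]
        rw [← Real.rpow_neg h2.le]
        exact Real.rpow_le_rpow_of_nonpos h2 h1 (by have : (0:ℝ) ≤ n := by positivity
                                                    linarith)
    _ ≤ _ := lintegral_mono_set hsub

end CompFrac

namespace CompFrac

/-- Weighted integral `∫_B g |w|^p d^{-sp}`. -/
def Xw {n : ℕ} (s p : ℝ) (x₀ : EuclideanSpace ℝ (Fin n)) (R : ℝ)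
    (g w : EuclideanSpace ℝ (Fin n) → ℝ) : ℝ≥0∞ :=
  ∫⁻ x in ball x₀ R, ENNReal.ofReal (g x * |w x| ^ p) *
    ENNReal.ofReal ((R - dist x x₀) ^ (-(s * p)))

/-- The cutoff function. -/
def cut {n : ℕ} (p : ℝ) (x₀ : EuclideanSpace ℝ (Fin n)) (R ε : ℝ)
    (x : EuclideanSpace ℝ (Fin n)) : ℝ := ecut p ε (R - dist x x₀)

lemma cut_meas {n : ℕ} (p : ℝ) (x₀ : EuclideanSpace ℝ (Fin n)) (R ε : ℝ) :
    Measurable (cut p x₀ R ε) := by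
  unfold cut ecut tcut; fun_prop

lemma phi_diff {n : ℕ} {p : ℝ} (hp : 1 < p) (hp2 : p ≤ 2) {x₀ : EuclideanSpace ℝ (Fin n)} {R ε : ℝ}
    (hε : 0 < ε) (w : EuclideanSpace ℝ (Fin n) → ℝ) {x y : EuclideanSpace ℝ (Fin n)}
    (hx : x ∈ ball x₀ R) (hy : y ∈ ball x₀ R) :
    |w x * cut p x₀ R ε x - w y * cut p x₀ R ε y| ^ p ≤ 4 * |w x - w y| ^ p +
      4 * (p / (p - 1)) ^ p *
        ((cut p x₀ R ε x * |w x| ^ p) * (min 1 (dist x y / (R - dist x x₀))) ^ p +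
         (cut p x₀ R ε y * |w y| ^ p) * (min 1 (dist y x / (R - dist y x₀))) ^ p) := by
  have hp0 : 0 < p := by linarith
  have hp1 : 0 < p - 1 := by linarith
  have key : ∀ x y : EuclideanSpace ℝ (Fin n), x ∈ ball x₀ R → y ∈ ball x₀ R →
      dist x x₀ ≤ dist y x₀ →
      |w x * cut p x₀ R ε x - w y * cut p x₀ R ε y| ^ p ≤ 4 * |w x - w y| ^ p +
      4 * (p / (p - 1)) ^ p *
        ((cut p x₀ R ε x * |w x| ^ p) * (min 1 (dist x y / (R - dist x x₀))) ^ p +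
         (cut p x₀ R ε y * |w y| ^ p) * (min 1 (dist y x / (R - dist y x₀))) ^ p) := by
    intro x y hx hy hxy
    rw [mem_ball] at hx hy
    have hdx : 0 < R - dist x x₀ := by linarith
    have hdy : 0 < R - dist y x₀ := by linarith
    have hr : (R - dist x x₀) - (R - dist y x₀) ≤ dist x y := by
      have := dist_triangle y x x₀
      rw [dist_comm x y]; linarith
    have hE := ecut_diff hp hε hdx (by linarith : R - dist y x₀ ≤ R - dist x x₀) hr
    have hmono := ecut_mono hp hε (by linarith : R - dist y x₀ ≤ R - dist x x₀)
    have hy0 := ecut_nonneg (p := p) hε (R - dist y x₀)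
    have hx0 := ecut_nonneg (p := p) hε (R - dist x x₀)
    have hy1 := ecut_le_one hp hε (R - dist y x₀)
    simp only [cut]
    set ex := ecut p ε (R - dist x x₀)
    set ey := ecut p ε (R - dist y x₀)
    have h1 : |w x * ex - w y * ey| ≤ |w x - w y| + |w x| * (ex - ey) := by
      have : w x * ex - w y * ey = (w x - w y) * ey + w x * (ex - ey) := by ring
      rw [this]
      refine (abs_add_le _ _).trans ?_
      rw [abs_mul, abs_mul, abs_of_nonneg hy0, abs_of_nonneg (by linarith : 0 ≤ ex - ey)]
      gcongr
      exact mul_le_of_le_one_right (abs_nonneg _) hy1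
    have hm : 0 ≤ min 1 (dist y x / (R - dist y x₀)) :=
      le_min zero_le_one (div_nonneg dist_nonneg hdy.le)
    have hd : 0 ≤ ex - ey := by linarith
    calc |w x * ex - w y * ey| ^ p ≤ (|w x - w y| + |w x| * (ex - ey)) ^ p := by gcongr
      _ ≤ 4 * (|w x - w y| ^ p + (|w x| * (ex - ey)) ^ p) :=
          add_rpow_le hp hp2 (abs_nonneg _) (by positivity)
      _ = 4 * |w x - w y| ^ p + 4 * (|w x| ^ p * (ex - ey) ^ p) := by
          rw [Real.mul_rpow (abs_nonneg _) hd]; ring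
      _ ≤ 4 * |w x - w y| ^ p + 4 * (|w x| ^ p * ((p / (p - 1)) ^ p *
            (ex * (min 1 (dist x y / (R - dist x x₀))) ^ p))) := by gcongr
      _ = 4 * |w x - w y| ^ p + 4 * (p / (p - 1)) ^ p *
        ((ex * |w x| ^ p) * (min 1 (dist x y / (R - dist x x₀))) ^ p + 0) := by ring
      _ ≤ _ := by
          gcongr
          positivity
  rcases le_total (dist x x₀) (dist y x₀) with h | h
  · exact key x y hx hy h
  · have := key y x hy hx h
    rw [abs_sub_comm (w x * _), abs_sub_comm (w x),
      add_comm ((cut p x₀ R ε x * |w x| ^ p) * _)]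
    exact this

/-- The kernel bound of `ker_upper` with a fixed constant. -/
def KerUp (n : ℕ) (s p C : ℝ) : Prop :=
  ∀ (x : EuclideanSpace ℝ (Fin n)) (r : ℝ), 0 < r →
      ∫⁻ y, ENNReal.ofReal (kr n s p (x, y)) * ENNReal.ofReal ((min 1 (dist x y / r)) ^ p)
        ≤ ENNReal.ofReal (C * r ^ (-(s * p)))

lemma T_bound {n : ℕ} {s p C : ℝ} (hC : KerUp n s p C) (hC0 : 0 < C)
    {x₀ : EuclideanSpace ℝ (Fin n)} {R : ℝ} {A : Set (EuclideanSpace ℝ (Fin n))}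
    (hA : MeasurableSet A) {g w : EuclideanSpace ℝ (Fin n) → ℝ} (hg : Measurable g)
    (hw : Measurable w) :
    ∫⁻ z in ball x₀ R ×ˢ A, ENNReal.ofReal ((g z.1 * |w z.1| ^ p)) *
      ENNReal.ofReal ((min 1 (dist z.1 z.2 / (R - dist z.1 x₀))) ^ p) ∂(nu n s p)
      ≤ ENNReal.ofReal C * Xw s p x₀ R g w := by
  rw [nu_prod measurableSet_ball hA (by fun_prop), Xw, ← lintegral_const_mul _ (by fun_prop)]
  refine setLIntegral_mono' measurableSet_ball fun x hx => ?_
  rw [mem_ball] at hx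
  calc ∫⁻ y in A, ENNReal.ofReal (kr n s p (x, y)) * (ENNReal.ofReal (g x * |w x| ^ p) *
        ENNReal.ofReal ((min 1 (dist x y / (R - dist x x₀))) ^ p))
      ≤ ∫⁻ y, ENNReal.ofReal (kr n s p (x, y)) * (ENNReal.ofReal (g x * |w x| ^ p) *
        ENNReal.ofReal ((min 1 (dist x y / (R - dist x x₀))) ^ p)) :=
        setLIntegral_le_lintegral _ _
    _ = ENNReal.ofReal (g x * |w x| ^ p) * ∫⁻ y, ENNReal.ofReal (kr n s p (x, y)) *
        ENNReal.ofReal ((min 1 (dist x y / (R - dist x x₀))) ^ p) := by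
        rw [← lintegral_const_mul]
        · refine lintegral_congr fun y => ?_
          ring
        · have := (kr_meas n s p).comp (measurable_prodMk_left (x := x))
          have h2 : Measurable (fun y => kr n s p (x, y)) := this
          fun_prop
    _ ≤ ENNReal.ofReal (g x * |w x| ^ p) * ENNReal.ofReal (C * (R - dist x x₀) ^ (-(s * p))) := by
        gcongr
        exact hC x _ (by linarith)
    _ = _ := by rw [ENNReal.ofReal_mul hC0.le]; ring

lemma T_off {n : ℕ} {s p C : ℝ} (hC : KerUp n s p C) (hC0 : 0 < C)
    {x₀ : EuclideanSpace ℝ (Fin n)} {R : ℝ}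
    {g w : EuclideanSpace ℝ (Fin n) → ℝ} (hg : Measurable g)
    (hw : Measurable w) :
    ∫⁻ z in ball x₀ R ×ˢ (ball x₀ R)ᶜ, ENNReal.ofReal ((g z.1 * |w z.1| ^ p)) ∂(nu n s p)
      ≤ ENNReal.ofReal C * Xw s p x₀ R g w := by
  refine le_trans ?_ (T_bound hC hC0 (x₀ := x₀) (R := R)
    (measurableSet_ball (x := x₀) (ε := R)).compl hg hw)
  refine setLIntegral_mono' (measurableSet_ball.prod measurableSet_ball.compl) ?_
  rintro z ⟨h1, h2⟩
  have h1' : dist z.1 x₀ < R := h1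
  have h2' : R ≤ dist z.2 x₀ := not_lt.1 h2
  have : min 1 (dist z.1 z.2 / (R - dist z.1 x₀)) = 1 := by
    apply min_eq_left
    rw [le_div_iff₀ (by linarith)]
    have := dist_triangle z.2 z.1 x₀
    rw [dist_comm z.1 z.2]; linarith
  rw [this]; simp

lemma phi_B {n : ℕ} {s p C : ℝ} (hC : KerUp n s p C) (hC0 : 0 < C)
    (hp : 1 < p) (hp2 : p ≤ 2) {x₀ : EuclideanSpace ℝ (Fin n)} {R ε : ℝ} (hε : 0 < ε)
    {w : EuclideanSpace ℝ (Fin n) → ℝ} (hw : Measurable w) :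
    ∫⁻ z in ball x₀ R ×ˢ ball x₀ R, ENNReal.ofReal
      (|w z.1 * cut p x₀ R ε z.1 - w z.2 * cut p x₀ R ε z.2| ^ p) ∂(nu n s p) ≤
    4 * gagliardoE n s p (ball x₀ R) w +
      ENNReal.ofReal (8 * (p / (p - 1)) ^ p * C) * Xw s p x₀ R (cut p x₀ R ε) w := by
  have hp1 : 0 < p - 1 := by linarith
  have hm := cut_meas p x₀ R ε
  have hB : MeasurableSet (ball x₀ R) := measurableSet_ball
  set T : EuclideanSpace ℝ (Fin n) × EuclideanSpace ℝ (Fin n) → ℝ≥0∞ := fun z =>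
    ENNReal.ofReal ((cut p x₀ R ε z.1 * |w z.1| ^ p)) *
      ENNReal.ofReal ((min 1 (dist z.1 z.2 / (R - dist z.1 x₀))) ^ p) with hT
  have hTm : Measurable T := by rw [hT]; fun_prop
  have hTb : ∫⁻ z in ball x₀ R ×ˢ ball x₀ R, T z ∂(nu n s p)
      ≤ ENNReal.ofReal C * Xw s p x₀ R (cut p x₀ R ε) w := T_bound hC hC0 hB hm hw
  have hTs : ∫⁻ z in ball x₀ R ×ˢ ball x₀ R, T z.swap ∂(nu n s p)
      = ∫⁻ z in ball x₀ R ×ˢ ball x₀ R, T z ∂(nu n s p) := (nu_swap hB hB hTm).symm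
  calc _ ≤ ∫⁻ z in ball x₀ R ×ˢ ball x₀ R, (4 * ENNReal.ofReal (|w z.1 - w z.2| ^ p) +
        ENNReal.ofReal (4 * (p / (p - 1)) ^ p) * (T z + T z.swap)) ∂(nu n s p) := by
        refine setLIntegral_mono' (hB.prod hB) ?_
        rintro z ⟨h1, h2⟩
        refine (ENNReal.ofReal_le_ofReal (phi_diff hp hp2 hε w h1 h2)).trans ?_
        have c1 : 0 ≤ cut p x₀ R ε z.1 := ecut_nonneg hε _
        have c2 : 0 ≤ cut p x₀ R ε z.2 := ecut_nonneg hε _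
        have h1' : dist z.1 x₀ < R := h1
        have h2' : dist z.2 x₀ < R := h2
        have m1 : 0 ≤ min 1 (dist z.1 z.2 / (R - dist z.1 x₀)) :=
          le_min zero_le_one (div_nonneg dist_nonneg (by linarith))
        have m2 : 0 ≤ min 1 (dist z.2 z.1 / (R - dist z.2 x₀)) :=
          le_min zero_le_one (div_nonneg dist_nonneg (by linarith))
        rw [ENNReal.ofReal_add (by positivity) (by positivity), ENNReal.ofReal_mul (by norm_num),
          ENNReal.ofReal_mul (by positivity), ENNReal.ofReal_add (by positivity) (by positivity),
          ENNReal.ofReal_mul (by positivity : 0 ≤ cut p x₀ R ε z.1 * |w z.1| ^ p),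
          ENNReal.ofReal_mul (by positivity : 0 ≤ cut p x₀ R ε z.2 * |w z.2| ^ p)]
        simp [hT]
    _ = 4 * gagliardoE n s p (ball x₀ R) w + ENNReal.ofReal (4 * (p / (p - 1)) ^ p) *
          (∫⁻ z in ball x₀ R ×ˢ ball x₀ R, T z ∂(nu n s p) +
            ∫⁻ z in ball x₀ R ×ˢ ball x₀ R, T z.swap ∂(nu n s p)) := by
        rw [lintegral_add_left (by fun_prop), lintegral_const_mul _ (by fun_prop),
          lintegral_const_mul _ (by exact hTm.add (hTm.comp measurable_swap)),
          lintegral_add_left hTm, ← gag_eq hB hw]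
    _ ≤ 4 * gagliardoE n s p (ball x₀ R) w + ENNReal.ofReal (4 * (p / (p - 1)) ^ p) *
          (ENNReal.ofReal C * Xw s p x₀ R (cut p x₀ R ε) w +
            ENNReal.ofReal C * Xw s p x₀ R (cut p x₀ R ε) w) := by
        rw [hTs]; gcongr
    _ = _ := by
        rw [← two_mul, ← mul_assoc, ← mul_assoc]
        congr 2
        rw [show (2:ℝ≥0∞) = ENNReal.ofReal 2 by simp, ← ENNReal.ofReal_mul (by positivity),
          ← ENNReal.ofReal_mul (by positivity)]
        congr 1; ring

lemma phi_univ {n : ℕ} {s p C : ℝ} (hC : KerUp n s p C) (hC0 : 0 < C)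
    (hp : 1 < p) (hp2 : p ≤ 2) {x₀ : EuclideanSpace ℝ (Fin n)} {R ε : ℝ} (hε : 0 < ε)
    {w : EuclideanSpace ℝ (Fin n) → ℝ} (hw : Measurable w) (hw0 : ∀ x, x ∉ ball x₀ R → w x = 0)
    (hX : Xw s p x₀ R (cut p x₀ R ε) w < ⊤) (hg : gagliardoE n s p (ball x₀ R) w < ⊤) :
    gagliardoE n s p univ (fun x => w x * cut p x₀ R ε x) < ⊤ := by
  have hm := cut_meas p x₀ R ε
  have hB : MeasurableSet (ball x₀ R) := measurableSet_ball
  have hp0 : 0 < p := by linarith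
  rw [gag_eq MeasurableSet.univ (by fun_prop), univ_prod_univ, Measure.restrict_univ,
    nu_split hB (by fun_prop)]
  · refine ENNReal.add_lt_top.2 ⟨lt_of_le_of_lt (phi_B hC hC0 hp hp2 hε hw) ?_, ?_⟩
    · refine ENNReal.add_lt_top.2 ⟨ENNReal.mul_lt_top (by simp) hg,
        ENNReal.mul_lt_top ENNReal.ofReal_lt_top hX⟩
    · refine ENNReal.mul_lt_top (by simp) (lt_of_le_of_lt ?_
        (ENNReal.mul_lt_top (ENNReal.ofReal_lt_top (r := C)) hX))
      refine le_trans ?_ (T_off hC hC0 (x₀ := x₀) (R := R) hm hw)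
      refine setLIntegral_mono' (hB.prod hB.compl) ?_
      rintro z ⟨h1, h2⟩
      apply ENNReal.ofReal_le_ofReal
      have c1 : 0 ≤ cut p x₀ R ε z.1 := ecut_nonneg hε _
      rw [hw0 z.2 h2, zero_mul, sub_zero, abs_mul, abs_of_nonneg c1,
        Real.mul_rpow (abs_nonneg _) c1, mul_comm]
      gcongr
      exact ecut_rpow_le hp hε _
  · intro z
    simp only [Prod.fst_swap, Prod.snd_swap]
    rw [abs_sub_comm]
  · intro z h1 h2
    simp [hw0 _ h1, hw0 _ h2, Real.zero_rpow hp0.ne']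

lemma integrable_test {n : ℕ} {s p : ℝ} (hp : 1 < p) (hp2 : p ≤ 2) (hs : 0 < s)
    {x₀ : EuclideanSpace ℝ (Fin n)} {R ε : ℝ} (hR : 0 < R) (hε : 0 < ε)
    {g φ : EuclideanSpace ℝ (Fin n) → ℝ} (hg : Measurable g) (hφ : Measurable φ)
    (hgp : ∫⁻ x in ball x₀ R, ENNReal.ofReal (|g x| ^ p) < ⊤)
    (hgg : gagliardoE n s p (ball x₀ R) g < ⊤)
    (htail : (∫⁻ x, ENNReal.ofReal (|g x| ^ (p - 1) / (1 + ‖x‖) ^ ((n : ℝ) + s * p))) < ⊤)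
    (hφ0 : ∀ x, x ∉ ball x₀ R → φ x = 0) (hφε : ∀ x, R - dist x x₀ ≤ ε → φ x = 0)
    (hφp : ∫⁻ x, ENNReal.ofReal (|φ x| ^ p) < ⊤)
    (hφg : gagliardoE n s p univ φ < ⊤) :
    Integrable (fun z : EuclideanSpace ℝ (Fin n) × EuclideanSpace ℝ (Fin n) =>
      Jp p (g z.1 - g z.2) * (φ z.1 - φ z.2)) (nu n s p) := by
  have hp0 : 0 < p := by linarith
  have hsp : 0 < s * p := by positivity
  have hns : 0 < (n:ℝ) + s * p := by positivity
  have hB : MeasurableSet (ball x₀ R) := measurableSet_ball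
  refine ⟨?_, ?_⟩
  · have : Measurable (fun z : EuclideanSpace ℝ (Fin n) × EuclideanSpace ℝ (Fin n) =>
      Jp p (g z.1 - g z.2) * (φ z.1 - φ z.2)) := by unfold Jp; fun_prop
    exact this.aestronglyMeasurable
  rw [hasFiniteIntegral_iff_norm]
  have e0 : ∀ z : EuclideanSpace ℝ (Fin n) × EuclideanSpace ℝ (Fin n),
      ‖Jp p (g z.1 - g z.2) * (φ z.1 - φ z.2)‖ = |g z.1 - g z.2| ^ (p - 1) * |φ z.1 - φ z.2| := by
    intro z; rw [Real.norm_eq_abs, abs_mul, abs_Jp hp]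
  simp_rw [e0]
  rw [nu_split hB (by fun_prop)]
  rotate_left
  · intro z
    simp only [Prod.fst_swap, Prod.snd_swap]
    rw [abs_sub_comm, abs_sub_comm (φ z.2)]
  · intro z h1 h2
    simp [hφ0 _ h1, hφ0 _ h2]
  refine ENNReal.add_lt_top.2 ⟨?_, ENNReal.mul_lt_top (by simp) ?_⟩
  · calc _ ≤ ∫⁻ z in ball x₀ R ×ˢ ball x₀ R, (ENNReal.ofReal (|g z.1 - g z.2| ^ p) +
          ENNReal.ofReal (|φ z.1 - φ z.2| ^ p)) ∂(nu n s p) := by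
          refine lintegral_mono fun z => ?_
          rw [← ENNReal.ofReal_add (by positivity) (by positivity)]
          apply ENNReal.ofReal_le_ofReal
          have := young (μ := 1) hp one_pos (abs_nonneg (g z.1 - g z.2))
            (abs_nonneg (φ z.1 - φ z.2))
          simpa using this
      _ = gagliardoE n s p (ball x₀ R) g + ∫⁻ z in ball x₀ R ×ˢ ball x₀ R,
          ENNReal.ofReal (|φ z.1 - φ z.2| ^ p) ∂(nu n s p) := by
          rw [lintegral_add_left (by fun_prop), ← gag_eq hB hg]
      _ ≤ gagliardoE n s p (ball x₀ R) g + gagliardoE n s p univ φ := by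
          rw [gag_eq MeasurableSet.univ hφ]
          gcongr
          · exact subset_univ _
          · exact subset_univ _
      _ < ⊤ := ENNReal.add_lt_top.2 ⟨hgg, hφg⟩
  -- off-diagonal part
  set M : ℝ := (1 + ‖x₀‖ + R) / ε + 1 with hM
  have hM0 : 0 < M := by positivity
  set N : ℝ := M ^ ((n:ℝ) + s * p) with hN
  have hN0 : 0 < N := by positivity
  have hφ1 : ∫⁻ x in ball x₀ R, ENNReal.ofReal |φ x| < ⊤ := by
    calc _ ≤ ∫⁻ x in ball x₀ R, (1 + ENNReal.ofReal (|φ x| ^ p)) := by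
          refine lintegral_mono fun x => ?_
          rcases le_total |φ x| 1 with h | h
          · exact (ENNReal.ofReal_le_one.2 h).trans le_self_add
          · refine le_trans ?_ le_add_self
            apply ENNReal.ofReal_le_ofReal
            calc |φ x| = |φ x| ^ (1:ℝ) := (Real.rpow_one _).symm
              _ ≤ _ := Real.rpow_le_rpow_of_exponent_le h hp.le
      _ = volume (ball x₀ R) + ∫⁻ x in ball x₀ R, ENNReal.ofReal (|φ x| ^ p) := by
          rw [lintegral_add_left (by fun_prop)]; simp
      _ ≤ volume (ball x₀ R) + ∫⁻ x, ENNReal.ofReal (|φ x| ^ p) := by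
          gcongr; exact Measure.restrict_le_self
      _ < ⊤ := ENNReal.add_lt_top.2 ⟨measure_ball_lt_top, hφp⟩
  have hφ2 : ∫⁻ x in ball x₀ R, ENNReal.ofReal (|g x| ^ (p - 1) * |φ x|) < ⊤ := by
    calc _ ≤ ∫⁻ x in ball x₀ R, (ENNReal.ofReal (|g x| ^ p) + ENNReal.ofReal (|φ x| ^ p)) := by
          refine lintegral_mono fun x => ?_
          rw [← ENNReal.ofReal_add (by positivity) (by positivity)]
          apply ENNReal.ofReal_le_ofReal
          have := young (μ := 1) hp one_pos (abs_nonneg (g x)) (abs_nonneg (φ x))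
          simpa using this
      _ = (∫⁻ x in ball x₀ R, ENNReal.ofReal (|g x| ^ p))
          + ∫⁻ x in ball x₀ R, ENNReal.ofReal (|φ x| ^ p) := by
          rw [lintegral_add_left (by fun_prop)]
      _ ≤ (∫⁻ x in ball x₀ R, ENNReal.ofReal (|g x| ^ p)) + ∫⁻ x, ENNReal.ofReal (|φ x| ^ p) := by
          gcongr; exact Measure.restrict_le_self
      _ < ⊤ := ENNReal.add_lt_top.2 ⟨hgp, hφp⟩
  have hI : ∫⁻ y : EuclideanSpace ℝ (Fin n),
      ENNReal.ofReal ((1 + ‖y‖) ^ (-((n : ℝ) + s * p))) < ⊤ :=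
    finite_integral_one_add_norm (by simp; linarith)
  rw [nu_prod hB hB.compl (by fun_prop)]
  calc _ ≤ ∫⁻ x in ball x₀ R, (ENNReal.ofReal (|g x| ^ (p - 1) * |φ x|) *
            (ENNReal.ofReal N * ∫⁻ y : EuclideanSpace ℝ (Fin n),
              ENNReal.ofReal ((1 + ‖y‖) ^ (-((n : ℝ) + s * p)))) +
          ENNReal.ofReal |φ x| * (ENNReal.ofReal N * ∫⁻ y,
            ENNReal.ofReal (|g y| ^ (p - 1) / (1 + ‖y‖) ^ ((n : ℝ) + s * p)))) := by
        refine setLIntegral_mono' hB fun x hx => ?_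
        rw [mem_ball] at hx
        rw [← lintegral_const_mul _ (by fun_prop), ← lintegral_const_mul _ (by fun_prop),
          ← lintegral_const_mul _ (by fun_prop), ← lintegral_const_mul _ (by fun_prop),
          ← lintegral_add_left (by fun_prop)]
        refine le_trans ?_ (setLIntegral_le_lintegral (ball x₀ R)ᶜ _)
        refine setLIntegral_mono' hB.compl fun y hy => ?_
        have hy' : R ≤ dist y x₀ := not_lt.1 hy
        rw [← ENNReal.ofReal_mul (kr_nonneg _), ← ENNReal.ofReal_mul hN0.le,
          ← ENNReal.ofReal_mul (by positivity), ← ENNReal.ofReal_mul hN0.le,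
          ← ENNReal.ofReal_mul (by positivity), ← ENNReal.ofReal_add (by positivity)
          (by positivity)]
        apply ENNReal.ofReal_le_ofReal
        simp only
        rw [hφ0 y hy, sub_zero]
        by_cases hφx : φ x = 0
        · simp [hφx]
        have hdε : ε < R - dist x x₀ := by
          by_contra h
          exact hφx (hφε x (not_lt.1 h))
        have hdxy : ε ≤ dist x y := by
          have := dist_triangle y x x₀
          rw [dist_comm x y]; linarith
        have h1 : 1 + ‖y‖ ≤ M * dist x y := by
          have a1 : ‖y‖ ≤ ‖x₀‖ + R + dist x y := by
            have t1 : ‖y‖ ≤ ‖x‖ + dist x y := by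
              have := norm_le_norm_add_norm_sub x y
              rwa [← dist_eq_norm] at this
            have t2 : ‖x‖ ≤ ‖x₀‖ + dist x x₀ := by
              have := norm_le_norm_add_norm_sub x₀ x
              rwa [← dist_eq_norm, dist_comm] at this
            linarith
          have a2 : 1 + ‖x₀‖ + R ≤ (1 + ‖x₀‖ + R) / ε * dist x y := by
            rw [div_mul_eq_mul_div, le_div_iff₀ hε]
            gcongr
          rw [hM]; linarith
        have hdp : 0 < dist x y := by linarith
        have h2 : kr n s p (x, y) ≤ N * (1 + ‖y‖) ^ (-((n : ℝ) + s * p)) := by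
          simp only [kr]
          rw [Real.rpow_neg (by positivity), ← div_eq_mul_inv, le_div_iff₀ (by positivity),
            inv_mul_le_iff₀ (by positivity), hN, ← Real.mul_rpow dist_nonneg hM0.le]
          apply Real.rpow_le_rpow (by positivity) _ hns.le
          rw [mul_comm]; exact h1
        have h3 : |g x - g y| ^ (p - 1) ≤ |g x| ^ (p - 1) + |g y| ^ (p - 1) :=
          (Real.rpow_le_rpow (abs_nonneg _) (abs_sub _ _) (by linarith)).trans
            (Real.rpow_add_le_add_rpow (abs_nonneg _) (abs_nonneg _) (by linarith) (by linarith))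
        calc kr n s p (x, y) * (|g x - g y| ^ (p - 1) * |φ x|)
            ≤ (N * (1 + ‖y‖) ^ (-((n : ℝ) + s * p))) *
              ((|g x| ^ (p - 1) + |g y| ^ (p - 1)) * |φ x|) := by gcongr
          _ = _ := by
            rw [Real.rpow_neg (by positivity)]
            ring
    _ = (∫⁻ x in ball x₀ R, ENNReal.ofReal (|g x| ^ (p - 1) * |φ x|)) *
            (ENNReal.ofReal N * ∫⁻ y : EuclideanSpace ℝ (Fin n),
              ENNReal.ofReal ((1 + ‖y‖) ^ (-((n : ℝ) + s * p)))) +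
          (∫⁻ x in ball x₀ R, ENNReal.ofReal |φ x|) * (ENNReal.ofReal N * ∫⁻ y,
            ENNReal.ofReal (|g y| ^ (p - 1) / (1 + ‖y‖) ^ ((n : ℝ) + s * p))) := by
        rw [lintegral_add_left (by fun_prop), lintegral_mul_const _ (by fun_prop),
          lintegral_mul_const _ (by fun_prop)]
    _ < ⊤ := by
        refine ENNReal.add_lt_top.2 ⟨ENNReal.mul_lt_top hφ2 (ENNReal.mul_lt_top ?_ hI),
          ENNReal.mul_lt_top hφ1 (ENNReal.mul_lt_top ?_ htail)⟩ <;> exact ENNReal.ofReal_lt_top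

end CompFrac

namespace CompFrac

/-- The data of the comparison problem, after modification on a null set. -/
structure CData (n : ℕ) (s p : ℝ) (x₀ : EuclideanSpace ℝ (Fin n)) (R : ℝ)
    (f u v : EuclideanSpace ℝ (Fin n) → ℝ) : Prop where
  hR : 0 < R
  um : Measurable u
  vm : Measurable v
  fm : Measurable f
  veq : ∀ x, x ∉ ball x₀ R → v x = u x
  up : ∫⁻ x in ball x₀ R, ENNReal.ofReal (|u x| ^ p) < ⊤
  vp : ∫⁻ x in ball x₀ R, ENNReal.ofReal (|v x| ^ p) < ⊤
  ug : gagliardoE n s p (ball x₀ (2 * R)) u < ⊤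
  vg : gagliardoE n s p (ball x₀ R) v < ⊤
  ut : (∫⁻ x, ENNReal.ofReal (|u x| ^ (p - 1) / (1 + ‖x‖) ^ ((n : ℝ) + s * p))) < ⊤
  vt : (∫⁻ x, ENNReal.ofReal (|v x| ^ (p - 1) / (1 + ‖x‖) ^ ((n : ℝ) + s * p))) < ⊤
  fp : ∫⁻ x in ball x₀ R, ENNReal.ofReal (|f x| ^ (p / (p - 1))) < ⊤
  weak : ∀ φ : EuclideanSpace ℝ (Fin n) → ℝ, Measurable φ →
    (∃ ε : ℝ, 0 < ε ∧ ∀ x, R - dist x x₀ ≤ ε → φ x = 0) →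
    (∫⁻ x, ENNReal.ofReal (|φ x| ^ p)) < ⊤ →
    gagliardoE n s p Set.univ φ < ⊤ →
    (∫ x, ∫ y, |u x - u y| ^ (p - 2) * (u x - u y) * (φ x - φ y) /
      dist x y ^ ((n : ℝ) + s * p)) = (∫ x in ball x₀ R, f x * φ x) ∧
    (∫ x, ∫ y, |v x - v y| ^ (p - 2) * (v x - v y) * (φ x - φ y) /
      dist x y ^ ((n : ℝ) + s * p)) = 0

lemma weak_nu {n : ℕ} {s p : ℝ} {g φ : EuclideanSpace ℝ (Fin n) → ℝ}
    (hI : Integrable (fun z : EuclideanSpace ℝ (Fin n) × EuclideanSpace ℝ (Fin n) =>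
      Jp p (g z.1 - g z.2) * (φ z.1 - φ z.2)) (nu n s p)) :
    ∫ z, Jp p (g z.1 - g z.2) * (φ z.1 - φ z.2) ∂(nu n s p) =
      ∫ x, ∫ y, |g x - g y| ^ (p - 2) * (g x - g y) * (φ x - φ y) /
        dist x y ^ ((n : ℝ) + s * p) := by
  have hk : Measurable (fun z => (kr n s p z).toNNReal) := (kr_meas n s p).real_toNNReal
  rw [nu] at hI ⊢
  rw [integrable_withDensity_iff_integrable_smul hk] at hI
  rw [integral_withDensity_eq_integral_smul hk, integral_prod _ hI]
  refine integral_congr_ae (Filter.Eventually.of_forall fun x => ?_)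
  refine integral_congr_ae (Filter.Eventually.of_forall fun y => ?_)
  simp only [NNReal.smul_def, Real.coe_toNNReal _ (kr_nonneg _), smul_eq_mul]
  rw [kr, Jp, div_eq_inv_mul]

lemma w_p {n : ℕ} {p : ℝ} (hp : 1 < p) (hp2 : p ≤ 2) {A : Set (EuclideanSpace ℝ (Fin n))}
    {u v : EuclideanSpace ℝ (Fin n) → ℝ} (hu : Measurable u) (hv : Measurable v)
    (h1 : ∫⁻ x in A, ENNReal.ofReal (|u x| ^ p) < ⊤)
    (h2 : ∫⁻ x in A, ENNReal.ofReal (|v x| ^ p) < ⊤) :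
    ∫⁻ x in A, ENNReal.ofReal (|u x - v x| ^ p) < ⊤ := by
  calc ∫⁻ x in A, ENNReal.ofReal (|u x - v x| ^ p)
      ≤ ∫⁻ x in A, 4 * (ENNReal.ofReal (|u x| ^ p) + ENNReal.ofReal (|v x| ^ p)) := by
        refine lintegral_mono fun x => ?_
        refine (ENNReal.ofReal_le_ofReal (abs_sub_rpow_le hp hp2 _ _)).trans (le_of_eq ?_)
        rw [ENNReal.ofReal_mul (by norm_num), ENNReal.ofReal_add (by positivity) (by positivity)]
        norm_num
    _ = 4 * ((∫⁻ x in A, ENNReal.ofReal (|u x| ^ p)) + ∫⁻ x in A, ENNReal.ofReal (|v x| ^ p)) := by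
        rw [lintegral_const_mul _ (by fun_prop), lintegral_add_left (by fun_prop)]
    _ < ⊤ := ENNReal.mul_lt_top (by simp) (ENNReal.add_lt_top.2 ⟨h1, h2⟩)

lemma w_g {n : ℕ} {s p : ℝ} (hp : 1 < p) (hp2 : p ≤ 2) {A : Set (EuclideanSpace ℝ (Fin n))}
    (hA : MeasurableSet A)
    {u v : EuclideanSpace ℝ (Fin n) → ℝ} (hu : Measurable u) (hv : Measurable v)
    (h1 : gagliardoE n s p A u < ⊤) (h2 : gagliardoE n s p A v < ⊤) :
    gagliardoE n s p A (fun x => u x - v x) < ⊤ := by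
  rw [gag_eq hA (by fun_prop)] at *
  calc ∫⁻ z in A ×ˢ A, ENNReal.ofReal (|u z.1 - v z.1 - (u z.2 - v z.2)| ^ p) ∂(nu n s p)
      ≤ ∫⁻ z in A ×ˢ A, 4 * (ENNReal.ofReal (|u z.1 - u z.2| ^ p) +
          ENNReal.ofReal (|v z.1 - v z.2| ^ p)) ∂(nu n s p) := by
        refine lintegral_mono fun z => ?_
        have e : u z.1 - v z.1 - (u z.2 - v z.2) = (u z.1 - u z.2) - (v z.1 - v z.2) := by ring
        simp only [e]
        refine (ENNReal.ofReal_le_ofReal (abs_sub_rpow_le hp hp2 _ _)).trans (le_of_eq ?_)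
        rw [ENNReal.ofReal_mul (by norm_num), ENNReal.ofReal_add (by positivity) (by positivity)]
        norm_num
    _ = 4 * (∫⁻ z in A ×ˢ A, ENNReal.ofReal (|u z.1 - u z.2| ^ p) ∂(nu n s p) +
          ∫⁻ z in A ×ˢ A, ENNReal.ofReal (|v z.1 - v z.2| ^ p) ∂(nu n s p)) := by
        rw [lintegral_const_mul _ (by fun_prop), lintegral_add_left (by fun_prop)]
    _ < ⊤ := ENNReal.mul_lt_top (by simp) (ENNReal.add_lt_top.2 ⟨h1, h2⟩)

lemma gag_mono {n : ℕ} {s p : ℝ} {A B : Set (EuclideanSpace ℝ (Fin n))} (h : A ⊆ B)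
    (u : EuclideanSpace ℝ (Fin n) → ℝ) : gagliardoE n s p A u ≤ gagliardoE n s p B u := by
  unfold gagliardoE
  refine (lintegral_mono fun x => ?_).trans (lintegral_mono_set h)
  exact lintegral_mono_set h

lemma young_f {p μ a b : ℝ} (hp : 1 < p) (hμ : 0 < μ) :
    |a| * |b| ≤ μ * |a| ^ (p / (p - 1)) + μ ^ (-(p - 1)) * |b| ^ p := by
  have hp1 : 0 < p - 1 := by linarith
  have := young hp hμ (Real.rpow_nonneg (abs_nonneg a) (1 / (p - 1))) (abs_nonneg b)
  rw [← Real.rpow_mul (abs_nonneg a), ← Real.rpow_mul (abs_nonneg a),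
    one_div_mul_cancel hp1.ne', Real.rpow_one] at this
  rwa [show p / (p - 1) = 1 / (p - 1) * p by ring]

lemma fw_le {n : ℕ} {p μ : ℝ} (hp : 1 < p) (hμ : 0 < μ) {A : Set (EuclideanSpace ℝ (Fin n))}
    {f w : EuclideanSpace ℝ (Fin n) → ℝ} (hf : Measurable f) (hw : Measurable w) :
    ∫⁻ x in A, ENNReal.ofReal (|f x| * |w x|) ≤
      ENNReal.ofReal μ * (∫⁻ x in A, ENNReal.ofReal (|f x| ^ (p / (p - 1)))) +
      ENNReal.ofReal (μ ^ (-(p - 1))) * ∫⁻ x in A, ENNReal.ofReal (|w x| ^ p) := by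
  rw [← lintegral_const_mul _ (by fun_prop), ← lintegral_const_mul _ (by fun_prop),
    ← lintegral_add_left (by fun_prop)]
  refine lintegral_mono fun x => ?_
  refine (ENNReal.ofReal_le_ofReal (young_f hp hμ)).trans (le_of_eq ?_)
  rw [ENNReal.ofReal_add (by positivity) (by positivity), ENNReal.ofReal_mul hμ.le,
    ENNReal.ofReal_mul (by positivity)]

lemma Xw_cut_fin {n : ℕ} {s p : ℝ} (hp : 1 < p) (hs : 0 < s) {x₀ : EuclideanSpace ℝ (Fin n)}
    {R ε : ℝ} (hε : 0 < ε) {w : EuclideanSpace ℝ (Fin n) → ℝ} (hw : Measurable w)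
    (h : ∫⁻ x in ball x₀ R, ENNReal.ofReal (|w x| ^ p) < ⊤) :
    Xw s p x₀ R (cut p x₀ R ε) w < ⊤ := by
  unfold Xw
  have hsp : 0 < s * p := by have : 0 < p := by linarith
                             positivity
  calc _ ≤ ∫⁻ x in ball x₀ R, ENNReal.ofReal (|w x| ^ p) * ENNReal.ofReal (ε ^ (-(s * p))) := by
        refine lintegral_mono fun x => ?_
        rcases le_total (R - dist x x₀) ε with h1 | h1
        · simp [cut, ecut_eq_zero hp hε h1]
        · refine mul_le_mul' (ENNReal.ofReal_le_ofReal ?_) (ENNReal.ofReal_le_ofReal ?_)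
          · exact mul_le_of_le_one_left (by positivity) (ecut_le_one hp hε _)
          · exact Real.rpow_le_rpow_of_nonpos hε h1 (by linarith)
    _ = (∫⁻ x in ball x₀ R, ENNReal.ofReal (|w x| ^ p)) * ENNReal.ofReal (ε ^ (-(s * p))) := by
        rw [lintegral_mul_const _ (by fun_prop)]
    _ < ⊤ := ENNReal.mul_lt_top h ENNReal.ofReal_lt_top

/-- The tested difference of the two equations. -/
def HH {n : ℕ} (p : ℝ) (u v φ : EuclideanSpace ℝ (Fin n) → ℝ)
    (z : EuclideanSpace ℝ (Fin n) × EuclideanSpace ℝ (Fin n)) : ℝ :=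
  (Jp p (u z.1 - u z.2) - Jp p (v z.1 - v z.2)) * (φ z.1 - φ z.2)

variable {n : ℕ} {s p : ℝ} {x₀ : EuclideanSpace ℝ (Fin n)} {R : ℝ}
    {f u v : EuclideanSpace ℝ (Fin n) → ℝ}

lemma CData.wp (h : CData n s p x₀ R f u v) (hp : 1 < p) (hp2 : p ≤ 2) :
    ∫⁻ x in ball x₀ R, ENNReal.ofReal (|u x - v x| ^ p) < ⊤ :=
  w_p hp hp2 h.um h.vm h.up h.vp

lemma CData.ugB (h : CData n s p x₀ R f u v) : gagliardoE n s p (ball x₀ R) u < ⊤ :=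
  lt_of_le_of_lt (gag_mono (ball_subset_ball (by linarith [h.hR])) u) h.ug

lemma CData.wg (h : CData n s p x₀ R f u v) (hp : 1 < p) (hp2 : p ≤ 2) :
    gagliardoE n s p (ball x₀ R) (fun x => u x - v x) < ⊤ :=
  w_g hp hp2 measurableSet_ball h.um h.vm h.ugB h.vg

lemma CData.fw (h : CData n s p x₀ R f u v) (hp : 1 < p) (hp2 : p ≤ 2) :
    ∫⁻ x in ball x₀ R, ENNReal.ofReal (|f x| * |u x - v x|) < ⊤ := by
  refine lt_of_le_of_lt (fw_le (w := fun x => u x - v x) hp one_pos h.fm (h.um.sub h.vm)) ?_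
  exact ENNReal.add_lt_top.2 ⟨ENNReal.mul_lt_top ENNReal.ofReal_lt_top h.fp,
    ENNReal.mul_lt_top ENNReal.ofReal_lt_top (h.wp hp hp2)⟩

lemma CData.test (h : CData n s p x₀ R f u v) {C : ℝ} (hC : KerUp n s p C) (hC0 : 0 < C)
    (hp : 1 < p) (hp2 : p ≤ 2) (hs : 0 < s) {ε : ℝ} (hε : 0 < ε) :
    Integrable (HH p u v (fun x => (u x - v x) * cut p x₀ R ε x)) (nu n s p) ∧
    ∫ z, HH p u v (fun x => (u x - v x) * cut p x₀ R ε x) z ∂(nu n s p) ≤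
      (∫⁻ x in ball x₀ R, ENNReal.ofReal (|f x| * |u x - v x|)).toReal := by
  have hum := h.um
  have hvm := h.vm
  have hm := cut_meas p x₀ R ε
  set φ : EuclideanSpace ℝ (Fin n) → ℝ := fun x => (u x - v x) * cut p x₀ R ε x with hφ
  have hφm : Measurable φ := by rw [hφ]; fun_prop
  have hφε : ∀ x, R - dist x x₀ ≤ ε → φ x = 0 := fun x hx => by
    simp only [hφ, cut, ecut_eq_zero hp hε hx, mul_zero]
  have hφ0 : ∀ x, x ∉ ball x₀ R → φ x = 0 := fun x hx => by
    simp only [hφ, h.veq x hx, sub_self, zero_mul]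
  have hc0 : ∀ x, 0 ≤ cut p x₀ R ε x := fun x => ecut_nonneg hε _
  have hc1 : ∀ x, cut p x₀ R ε x ≤ 1 := fun x => ecut_le_one hp hε _
  have hφle : ∀ x, |φ x| ≤ |u x - v x| := fun x => by
    simp only [hφ, abs_mul, abs_of_nonneg (hc0 x)]
    exact mul_le_of_le_one_right (abs_nonneg _) (hc1 x)
  have hφp : ∫⁻ x, ENNReal.ofReal (|φ x| ^ p) < ⊤ := by
    rw [← lintegral_add_compl _ (measurableSet_ball (x := x₀) (ε := R))]
    refine ENNReal.add_lt_top.2 ⟨lt_of_le_of_lt (lintegral_mono fun x => ?_) (h.wp hp hp2), ?_⟩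
    · exact ENNReal.ofReal_le_ofReal (Real.rpow_le_rpow (abs_nonneg _) (hφle x) (by linarith))
    · rw [setLIntegral_congr_fun (g := fun _ => 0) measurableSet_ball.compl]
      · simp
      · intro x hx
        simp [hφ0 x hx, Real.zero_rpow (by linarith : p ≠ 0)]
  have hφg : gagliardoE n s p univ φ < ⊤ :=
    phi_univ hC hC0 hp hp2 hε (w := fun x => u x - v x) (h.um.sub h.vm)
      (fun x hx => by simp [h.veq x hx]) (Xw_cut_fin hp hs hε (h.um.sub h.vm) (h.wp hp hp2))
      (h.wg hp hp2)
  have I1 := integrable_test hp hp2 hs h.hR hε h.um hφm h.up h.ugB h.ut hφ0 hφε hφp hφg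
  have I2 := integrable_test hp hp2 hs h.hR hε h.vm hφm h.vp h.vg h.vt hφ0 hφε hφp hφg
  obtain ⟨W1, W2⟩ := h.weak φ hφm ⟨ε, hε, hφε⟩ hφp hφg
  have e : HH p u v φ = fun z => Jp p (u z.1 - u z.2) * (φ z.1 - φ z.2) -
      Jp p (v z.1 - v z.2) * (φ z.1 - φ z.2) := by
    funext z; simp only [HH]; ring
  rw [e]
  refine ⟨I1.sub I2, ?_⟩
  rw [integral_sub I1 I2, weak_nu I1, weak_nu I2, W1, W2, sub_zero]
  have hfm := h.fm
  have hfwI : Integrable (fun x => |f x| * |u x - v x|) (volume.restrict (ball x₀ R)) := by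
    refine ⟨(by fun_prop : Measurable _).aestronglyMeasurable, ?_⟩
    rw [hasFiniteIntegral_iff_ofReal (Filter.Eventually.of_forall fun x => by positivity)]
    exact h.fw hp hp2
  rw [← integral_eq_lintegral_of_nonneg_ae (Filter.Eventually.of_forall fun x => by positivity)
    hfwI.1]
  refine (le_abs_self _).trans ((abs_integral_le_integral_abs).trans ?_)
  refine integral_mono_of_nonneg (Filter.Eventually.of_forall fun x => by positivity) hfwI
    (Filter.Eventually.of_forall fun x => ?_)
  simp only [abs_mul]
  exact mul_le_mul_of_nonneg_left (hφle x) (abs_nonneg _)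

lemma Jp_meas (p : ℝ) : Measurable (Jp p) := by unfold Jp; fun_prop

lemma HH_meas {φ : EuclideanSpace ℝ (Fin n) → ℝ} (hu : Measurable u) (hv : Measurable v)
    (hφ : Measurable φ) : Measurable (HH p u v φ) := by
  have := Jp_meas p
  unfold HH; fun_prop

/-- generic: negative part control. -/
lemma off_bound {α : Type*} [MeasurableSpace α] {μ : Measure α} {H : α → ℝ} (hH : Integrable H μ)
    {a : ℝ≥0∞} (ha : a < ⊤) (hle : ∫ z, H z ∂μ ≤ a.toReal) {S : Set α} (hS : MeasurableSet S)
    (h0 : ∀ z, z ∉ S → 0 ≤ H z) :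
    ∫⁻ z in Sᶜ, ENNReal.ofReal (H z) ∂μ ≤ a + ∫⁻ z in S, ENNReal.ofReal |H z| ∂μ := by
  have e1 := integral_add_compl hS hH
  have e2 : ∫⁻ z in Sᶜ, ENNReal.ofReal (H z) ∂μ = ENNReal.ofReal (∫ z in Sᶜ, H z ∂μ) := by
    rw [ofReal_integral_eq_lintegral_ofReal hH.restrict]
    exact (ae_restrict_iff' hS.compl).2 (Filter.Eventually.of_forall h0)
  have e3 : ∫⁻ z in S, ENNReal.ofReal |H z| ∂μ = ENNReal.ofReal (∫ z in S, |H z| ∂μ) := by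
    rw [ofReal_integral_eq_lintegral_ofReal hH.abs.restrict]
    exact Filter.Eventually.of_forall fun z => abs_nonneg _
  have e4 : |∫ z in S, H z ∂μ| ≤ ∫ z in S, |H z| ∂μ := abs_integral_le_integral_abs
  have e5 := neg_abs_le (∫ z in S, H z ∂μ)
  rw [e2, e3]
  calc ENNReal.ofReal (∫ z in Sᶜ, H z ∂μ) ≤ ENNReal.ofReal (a.toReal + ∫ z in S, |H z| ∂μ) :=
        ENNReal.ofReal_le_ofReal (by linarith)
    _ ≤ _ := by
        refine ENNReal.ofReal_add_le.trans ?_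
        rw [ENNReal.ofReal_toReal ha.ne]

lemma fatou_gen {α : Type*} [MeasurableSpace α] {μ : Measure α} {H : ℕ → α → ℝ} {G g : α → ℝ}
    (hH : ∀ k, Integrable (H k) μ) (hHm : ∀ k, Measurable (H k))
    {a : ℝ≥0∞} (ha : a < ⊤) (hle : ∀ k, ∫ z, H k z ∂μ ≤ a.toReal)
    (hg : Measurable g) (hg0 : ∀ z, 0 ≤ g z) (hgf : ∫⁻ z, ENNReal.ofReal (g z) ∂μ < ⊤)
    (hlow : ∀ k z, - g z ≤ H k z) (hG0 : ∀ z, 0 ≤ G z) (hGm : Measurable G)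
    (hlim : ∀ z, Filter.Tendsto (fun k => H k z) Filter.atTop (nhds (G z))) :
    ∫⁻ z, ENNReal.ofReal (G z) ∂μ ≤ a := by
  have hgi : Integrable g μ := ⟨hg.aestronglyMeasurable, by
    rwa [hasFiniteIntegral_iff_ofReal (Filter.Eventually.of_forall hg0)]⟩
  have h1 : ∀ k, ∫⁻ z, ENNReal.ofReal (H k z + g z) ∂μ ≤ a + ∫⁻ z, ENNReal.ofReal (g z) ∂μ := by
    intro k
    have hi : Integrable (fun z => H k z + g z) μ := (hH k).add hgi
    rw [← ofReal_integral_eq_lintegral_ofReal hi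
      (Filter.Eventually.of_forall fun z => by have := hlow k z; simp; linarith),
      ← ofReal_integral_eq_lintegral_ofReal hgi (Filter.Eventually.of_forall hg0)]
    rw [integral_add (hH k) hgi]
    refine ENNReal.ofReal_add_le.trans ?_
    gcongr
    exact ENNReal.ofReal_le_of_le_toReal (hle k)
  have h2 : ∫⁻ z, ENNReal.ofReal (G z + g z) ∂μ ≤ a + ∫⁻ z, ENNReal.ofReal (g z) ∂μ := by
    have := lintegral_liminf_le (μ := μ) (u := Filter.atTop) (f := fun k z => ENNReal.ofReal (H k z + g z))
      (fun k => by have := hHm k; fun_prop)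
    have e : ∀ z, Filter.liminf (fun k => ENNReal.ofReal (H k z + g z)) Filter.atTop =
        ENNReal.ofReal (G z + g z) := fun z =>
      (ENNReal.tendsto_ofReal ((hlim z).add_const _)).liminf_eq
    simp only [e] at this
    refine this.trans ?_
    refine Filter.liminf_le_of_le (by isBoundedDefault) fun b hb => ?_
    obtain ⟨k, hk⟩ := hb.exists
    exact hk.trans (h1 k)
  have h3 : ∫⁻ z, ENNReal.ofReal (G z + g z) ∂μ =
      ∫⁻ z, ENNReal.ofReal (G z) ∂μ + ∫⁻ z, ENNReal.ofReal (g z) ∂μ := by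
    rw [← lintegral_add_left (by fun_prop)]
    exact lintegral_congr fun z => ENNReal.ofReal_add (hG0 z) (hg0 z)
  rw [h3] at h2
  exact (ENNReal.add_le_add_iff_right hgf.ne).1 h2

end CompFrac

namespace CompFrac

def KerLow (n : ℕ) (s p c : ℝ) : Prop :=
  ∀ (x₀ x : EuclideanSpace ℝ (Fin n)) (R : ℝ), x ∈ ball x₀ R →
      ENNReal.ofReal (c * (R - dist x x₀) ^ (-(s * p))) ≤
      ∫⁻ y in ball x₀ (2 * R) \ ball x₀ R, ENNReal.ofReal (kr n s p (x, y))

section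
variable {n : ℕ} {s p : ℝ} {x₀ : EuclideanSpace ℝ (Fin n)} {R : ℝ}
    {f u v : EuclideanSpace ℝ (Fin n) → ℝ}

lemma low_bound {c : ℝ} (hc : KerLow n s p c) (hc0 : 0 < c)
    {g w : EuclideanSpace ℝ (Fin n) → ℝ} (hg : Measurable g) (hw : Measurable w) :
    ENNReal.ofReal c * Xw s p x₀ R g w ≤
      ∫⁻ z in ball x₀ R ×ˢ (ball x₀ (2 * R) \ ball x₀ R),
        ENNReal.ofReal (g z.1 * |w z.1| ^ p) ∂(nu n s p) := by
  rw [nu_prod measurableSet_ball (measurableSet_ball.diff measurableSet_ball) (by fun_prop), Xw,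
    ← lintegral_const_mul _ (by fun_prop)]
  refine setLIntegral_mono' measurableSet_ball fun x hx => ?_
  have hk : Measurable (fun y => kr n s p (x, y)) := (kr_meas n s p).comp (by fun_prop)
  simp only
  rw [lintegral_mul_const _ (by fun_prop)]
  calc ENNReal.ofReal c * (ENNReal.ofReal (g x * |w x| ^ p) *
        ENNReal.ofReal ((R - dist x x₀) ^ (-(s * p))))
      = ENNReal.ofReal (c * (R - dist x x₀) ^ (-(s * p))) * ENNReal.ofReal (g x * |w x| ^ p) := by
        rw [ENNReal.ofReal_mul hc0.le]; ring
    _ ≤ _ := by gcongr; exact hc x₀ x R hx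

lemma HH_abs_le {φ : EuclideanSpace ℝ (Fin n) → ℝ} (hp : 1 < p) {μ : ℝ} (hμ : 0 < μ)
    (z : EuclideanSpace ℝ (Fin n) × EuclideanSpace ℝ (Fin n)) :
    |HH p u v φ z| ≤ μ * (|u z.1 - u z.2| ^ p + |v z.1 - v z.2| ^ p) +
      2 * μ ^ (-(p - 1)) * |φ z.1 - φ z.2| ^ p := by
  have h1 := young hp hμ (abs_nonneg (u z.1 - u z.2)) (abs_nonneg (φ z.1 - φ z.2))
  have h2 := young hp hμ (abs_nonneg (v z.1 - v z.2)) (abs_nonneg (φ z.1 - φ z.2))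
  have h3 : |Jp p (u z.1 - u z.2) - Jp p (v z.1 - v z.2)| ≤
      |u z.1 - u z.2| ^ (p - 1) + |v z.1 - v z.2| ^ (p - 1) := by
    rw [← abs_Jp hp, ← abs_Jp hp]; exact abs_sub _ _
  rw [HH, abs_mul]
  have h4 := mul_le_mul_of_nonneg_right h3 (abs_nonneg (φ z.1 - φ z.2))
  linarith

lemma CData.HH_off (h : CData n s p x₀ R f u v) (hp : 1 < p) (hp2 : p ≤ 2) {ε : ℝ} (hε : 0 < ε)
    (z : EuclideanSpace ℝ (Fin n) × EuclideanSpace ℝ (Fin n)) (hz : z ∉ ball x₀ R ×ˢ ball x₀ R) :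
    0 ≤ HH p u v (fun x => (u x - v x) * cut p x₀ R ε x) z := by
  have hc0 : ∀ x, 0 ≤ cut p x₀ R ε x := fun x => ecut_nonneg hε _
  have hm := mono_nonneg hp hp2 (u z.1 - u z.2) (v z.1 - v z.2)
  simp only [HH]
  by_cases h1 : z.1 ∈ ball x₀ R
  · have h2 : z.2 ∉ ball x₀ R := fun h2 => hz ⟨h1, h2⟩
    have e2 := h.veq _ h2
    rw [e2] at hm ⊢
    have := mul_nonneg hm (hc0 z.1)
    refine this.trans (le_of_eq ?_)
    ring
  · have e1 := h.veq _ h1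
    rw [e1] at hm ⊢
    have := mul_nonneg hm (hc0 z.2)
    refine this.trans (le_of_eq ?_)
    ring

lemma absorb {c k : ℝ} (hc : 0 < c) (hk : k ≤ c / 2) {X M : ℝ≥0∞} (hX : X < ⊤)
    (h : ENNReal.ofReal c * X ≤ M + ENNReal.ofReal k * X) : X ≤ M / ENNReal.ofReal (c / 2) := by
  have hc2 : 0 < c / 2 := by linarith
  rw [ENNReal.le_div_iff_mul_le (Or.inl (by simpa using hc2)) (Or.inl ENNReal.ofReal_ne_top)]
  have e : ENNReal.ofReal c = ENNReal.ofReal (c / 2) + ENNReal.ofReal (c / 2) := by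
    rw [← ENNReal.ofReal_add hc2.le hc2.le]; congr 1; ring
  rw [e, add_mul] at h
  have h' : ENNReal.ofReal (c / 2) * X + ENNReal.ofReal (c / 2) * X ≤
      M + ENNReal.ofReal (c / 2) * X := h.trans (by gcongr)
  rw [mul_comm]
  exact (ENNReal.add_le_add_iff_right (ENNReal.mul_lt_top ENNReal.ofReal_lt_top hX).ne).1 h'

lemma CData.X_bound (h : CData n s p x₀ R f u v) {C c : ℝ} (hC : KerUp n s p C) (hC0 : 0 < C)
    (hc : KerLow n s p c) (hc0 : 0 < c)
    (hp : 1 < p) (hp2 : p ≤ 2) (hs : 0 < s) :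
    ∃ M : ℝ≥0∞, M < ⊤ ∧ ∀ ε : ℝ, 0 < ε →
      Xw s p x₀ R (cut p x₀ R ε) (fun x => u x - v x) ≤ M := by
  have hp1 : 0 < p - 1 := by linarith
  have hum := h.um
  have hvm := h.vm
  have hR := h.hR
  have hB : MeasurableSet (ball x₀ R) := measurableSet_ball
  set C1 : ℝ := 3 / (p - 1) with hC1
  have hC1p : 0 < C1 := by positivity
  set K : ℝ := 8 * (p / (p - 1)) ^ p * C with hK
  have hKp : 0 < K := by have : 0 < p := by linarith
                         positivity
  set t : ℝ := c / (4 * C1 * K) with ht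
  have htp : 0 < t := by positivity
  set μ : ℝ := t ^ (-(1 / (p - 1))) with hμ
  have hμp : 0 < μ := by positivity
  have hμt : μ ^ (-(p - 1)) = t := by
    rw [hμ, ← Real.rpow_mul htp.le]
    rw [show -(1 / (p - 1)) * -(p - 1) = 1 by field_simp, Real.rpow_one]
  set a := ∫⁻ x in ball x₀ R, ENNReal.ofReal (|f x| * |u x - v x|) with ha
  have hafin : a < ⊤ := h.fw hp hp2
  set gu := gagliardoE n s p (ball x₀ R) u with hgu
  set gv := gagliardoE n s p (ball x₀ R) v with hgv
  set gw := gagliardoE n s p (ball x₀ R) (fun x => u x - v x) with hgw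
  set G2 := gagliardoE n s p (ball x₀ (2 * R)) u with hG2
  set M0 : ℝ≥0∞ := G2 + ENNReal.ofReal C1 * (a + (ENNReal.ofReal μ * (gu + gv) +
    ENNReal.ofReal (2 * t) * (4 * gw))) with hM0
  have hM0f : M0 < ⊤ := by
    have h1 : G2 < ⊤ := h.ug
    have h2 : gu < ⊤ := h.ugB
    have h3 : gv < ⊤ := h.vg
    have h4 : gw < ⊤ := h.wg hp hp2
    refine ENNReal.add_lt_top.2 ⟨h1, ENNReal.mul_lt_top ENNReal.ofReal_lt_top
      (ENNReal.add_lt_top.2 ⟨hafin, ENNReal.add_lt_top.2 ⟨?_, ?_⟩⟩)⟩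
    · exact ENNReal.mul_lt_top ENNReal.ofReal_lt_top (ENNReal.add_lt_top.2 ⟨h2, h3⟩)
    · exact ENNReal.mul_lt_top ENNReal.ofReal_lt_top (ENNReal.mul_lt_top (by simp) h4)
  refine ⟨M0 / ENNReal.ofReal (c / 2), ?_, fun ε hε => ?_⟩
  · exact ENNReal.div_lt_top hM0f.ne (by simpa using hc0)
  have hm := cut_meas p x₀ R ε
  have hcut0 : ∀ x, 0 ≤ cut p x₀ R ε x := fun x => ecut_nonneg hε _
  have hcut1 : ∀ x, cut p x₀ R ε x ≤ 1 := fun x => ecut_le_one hp hε _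
  set X := Xw s p x₀ R (cut p x₀ R ε) (fun x => u x - v x) with hX
  have hXf : X < ⊤ := Xw_cut_fin hp hs hε (hum.sub hvm) (h.wp hp hp2)
  obtain ⟨hI, hle⟩ := h.test hC hC0 hp hp2 hs hε
  set φ : EuclideanSpace ℝ (Fin n) → ℝ := fun x => (u x - v x) * cut p x₀ R ε x with hφ
  have hφm : Measurable φ := by rw [hφ]; fun_prop
  have hHm : Measurable (HH p u v φ) := HH_meas hum hvm hφm
  have s1 := off_bound hI hafin hle (hB.prod hB) (h.HH_off hp hp2 hε)
  have s2 : ∫⁻ z in ball x₀ R ×ˢ ball x₀ R, ENNReal.ofReal |HH p u v φ z| ∂(nu n s p) ≤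
      ENNReal.ofReal μ * (gu + gv) + ENNReal.ofReal (2 * t) * (4 * gw + ENNReal.ofReal K * X) := by
    calc _ ≤ ∫⁻ z in ball x₀ R ×ˢ ball x₀ R, (ENNReal.ofReal μ *
          (ENNReal.ofReal (|u z.1 - u z.2| ^ p) + ENNReal.ofReal (|v z.1 - v z.2| ^ p)) +
          ENNReal.ofReal (2 * t) * ENNReal.ofReal (|φ z.1 - φ z.2| ^ p)) ∂(nu n s p) := by
          refine lintegral_mono fun z => ?_
          refine (ENNReal.ofReal_le_ofReal (HH_abs_le hp hμp z)).trans (le_of_eq ?_)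
          rw [hμt, ENNReal.ofReal_add (by positivity) (by positivity),
            ENNReal.ofReal_mul hμp.le, ENNReal.ofReal_add (by positivity) (by positivity),
            ← ENNReal.ofReal_mul (by positivity)]
      _ = ENNReal.ofReal μ * (gu + gv) + ENNReal.ofReal (2 * t) *
          ∫⁻ z in ball x₀ R ×ˢ ball x₀ R, ENNReal.ofReal (|φ z.1 - φ z.2| ^ p) ∂(nu n s p) := by
          rw [lintegral_add_left (by fun_prop), lintegral_const_mul _ (by fun_prop),
            lintegral_const_mul _ (by fun_prop), lintegral_add_left (by fun_prop), hgu, hgv,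
            gag_eq hB hum, gag_eq hB hvm]
      _ ≤ _ := by
          gcongr
          exact phi_B hC hC0 hp hp2 hε (w := fun x => u x - v x) (hum.sub hvm)
  have s3 : ∫⁻ z in ball x₀ R ×ˢ (ball x₀ (2 * R) \ ball x₀ R),
        ENNReal.ofReal (cut p x₀ R ε z.1 * |u z.1 - v z.1| ^ p) ∂(nu n s p) ≤
      G2 + ENNReal.ofReal C1 *
        ∫⁻ z in (ball x₀ R ×ˢ ball x₀ R)ᶜ, ENNReal.ofReal (HH p u v φ z) ∂(nu n s p) := by
    have hS : MeasurableSet (ball x₀ R ×ˢ (ball x₀ (2 * R) \ ball x₀ R)) :=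
      hB.prod (measurableSet_ball.diff measurableSet_ball)
    calc _ ≤ ∫⁻ z in ball x₀ R ×ˢ (ball x₀ (2 * R) \ ball x₀ R),
          (ENNReal.ofReal (|u z.1 - u z.2| ^ p) +
            ENNReal.ofReal C1 * ENNReal.ofReal (HH p u v φ z)) ∂(nu n s p) := by
          refine setLIntegral_mono' hS ?_
          rintro z ⟨h1, h2, h3⟩
          rw [← ENNReal.ofReal_mul hC1p.le]
          refine (ENNReal.ofReal_le_ofReal ?_).trans ENNReal.ofReal_add_le
          have k := key_ptwise hp hp2 one_pos le_rfl (u z.1 - u z.2) (v z.1 - v z.2)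
          rw [Real.one_rpow, one_mul, mul_one] at k
          have e2 := h.veq _ h3
          simp only [HH, hφ]
          rw [e2] at k ⊢
          rw [show u z.1 - u z.2 - (v z.1 - u z.2) = u z.1 - v z.1 by ring] at k
          have k2 := mul_le_mul_of_nonneg_left k (hcut0 z.1)
          have k3 : cut p x₀ R ε z.1 * |u z.1 - u z.2| ^ p ≤ |u z.1 - u z.2| ^ p :=
            mul_le_of_le_one_left (by positivity) (hcut1 _)
          calc _ ≤ _ := k2
            _ = cut p x₀ R ε z.1 * |u z.1 - u z.2| ^ p + C1 *
              ((Jp p (u z.1 - u z.2) - Jp p (v z.1 - u z.2)) *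
              ((u z.1 - v z.1) * cut p x₀ R ε z.1 - (u z.2 - u z.2) * cut p x₀ R ε z.2)) := by
                rw [hC1]; ring
            _ ≤ _ := by linarith
      _ = ∫⁻ z in ball x₀ R ×ˢ (ball x₀ (2 * R) \ ball x₀ R),
            ENNReal.ofReal (|u z.1 - u z.2| ^ p) ∂(nu n s p) + ENNReal.ofReal C1 *
            ∫⁻ z in ball x₀ R ×ˢ (ball x₀ (2 * R) \ ball x₀ R),
              ENNReal.ofReal (HH p u v φ z) ∂(nu n s p) := by
          rw [lintegral_add_left (by fun_prop), lintegral_const_mul _ (by fun_prop)]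
      _ ≤ _ := by
          rw [hG2, gag_eq measurableSet_ball hum]
          refine add_le_add (lintegral_mono_set ?_) (mul_le_mul_right (lintegral_mono_set ?_) _)
          · exact prod_mono (ball_subset_ball (by linarith)) sdiff_subset
          · rintro z ⟨h1, h2, h3⟩ h4
            exact h3 h4.2
  have s4 := low_bound (x₀ := x₀) (R := R) hc hc0 hm (hum.sub hvm)
  refine absorb hc0 (k := C1 * (2 * t * K)) (by rw [ht]; field_simp; norm_num) hXf ?_
  calc ENNReal.ofReal c * X ≤ _ := s4.trans s3
    _ ≤ G2 + ENNReal.ofReal C1 * (a + (ENNReal.ofReal μ * (gu + gv) +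
        ENNReal.ofReal (2 * t) * (4 * gw + ENNReal.ofReal K * X))) := by
        gcongr
        exact s1.trans (by gcongr)
    _ = M0 + ENNReal.ofReal (C1 * (2 * t * K)) * X := by
        rw [ENNReal.ofReal_mul hC1p.le,
          ENNReal.ofReal_mul (by positivity : 0 ≤ 2 * t) (q := K), hM0]
        ring

lemma cut_tendsto (hp : 1 < p) {x : EuclideanSpace ℝ (Fin n)} (hx : x ∈ ball x₀ R) :
    Filter.Tendsto (fun k : ℕ => cut p x₀ R (1 / ((k : ℝ) + 1)) x) Filter.atTop (nhds 1) := by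
  have hd : 0 < R - dist x x₀ := by rw [mem_ball] at hx; linarith
  have h0 : Filter.Tendsto (fun k : ℕ => 1 / ((k : ℝ) + 1)) Filter.atTop (nhds 0) :=
    tendsto_one_div_add_atTop_nhds_zero_nat
  have h1 : Filter.Tendsto (fun k : ℕ => tcut (1 / ((k : ℝ) + 1)) (R - dist x x₀)) Filter.atTop
      (nhds (1 - 0 / max (R - dist x x₀) 0)) := by
    unfold tcut
    refine tendsto_const_nhds.sub (h0.div (tendsto_const_nhds.max h0) ?_)
    rw [max_eq_left hd.le]; exact hd.ne'
  have h2 := h1.rpow_const (p := p / (p - 1)) (Or.inr (div_nonneg (by linarith) (by linarith)))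
  simpa [cut, ecut] using h2

lemma CData.X_fin (h : CData n s p x₀ R f u v) {C c : ℝ} (hC : KerUp n s p C) (hC0 : 0 < C)
    (hc : KerLow n s p c) (hc0 : 0 < c)
    (hp : 1 < p) (hp2 : p ≤ 2) (hs : 0 < s) :
    Xw s p x₀ R (fun _ => 1) (fun x => u x - v x) < ⊤ := by
  obtain ⟨M, hM, hb⟩ := h.X_bound hC hC0 hc hc0 hp hp2 hs
  refine lt_of_le_of_lt ?_ hM
  have hum := h.um
  have hvm := h.vm
  have hmm := fun k : ℕ => cut_meas p x₀ R (1 / ((k : ℝ) + 1))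
  have := lintegral_liminf_le (μ := volume.restrict (ball x₀ R)) (u := Filter.atTop)
    (f := fun (k : ℕ) x => ENNReal.ofReal (cut p x₀ R (1 / ((k : ℝ) + 1)) x * |u x - v x| ^ p) *
      ENNReal.ofReal ((R - dist x x₀) ^ (-(s * p)))) (fun k => by have := hmm k; fun_prop)
  calc Xw s p x₀ R (fun _ => 1) (fun x => u x - v x) = _ := by
        rw [Xw]
        refine setLIntegral_congr_fun measurableSet_ball fun x hx => ?_
        refine (Filter.Tendsto.liminf_eq ?_).symm
        refine ENNReal.Tendsto.mul_const (ENNReal.tendsto_ofReal ((cut_tendsto hp hx).mul_const _))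
          (Or.inr ENNReal.ofReal_ne_top)
    _ ≤ _ := this
    _ ≤ M := by
        refine Filter.liminf_le_of_le (by isBoundedDefault) fun b hbb => ?_
        obtain ⟨k, hk⟩ := hbb.exists
        exact hk.trans (hb _ (by positivity))

end
end CompFrac

namespace CompFrac

section
variable {n : ℕ} {s p : ℝ} {x₀ : EuclideanSpace ℝ (Fin n)} {R : ℝ}
    {f u v : EuclideanSpace ℝ (Fin n) → ℝ}

lemma CData.HH_lim (h : CData n s p x₀ R f u v) (hp : 1 < p)
    (z : EuclideanSpace ℝ (Fin n) × EuclideanSpace ℝ (Fin n)) :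
    Filter.Tendsto (fun k : ℕ =>
      HH p u v (fun x => (u x - v x) * cut p x₀ R (1 / ((k : ℝ) + 1)) x) z) Filter.atTop
      (nhds (HH p u v (fun x => u x - v x) z)) := by
  have hx : ∀ x, Filter.Tendsto (fun k : ℕ => (u x - v x) * cut p x₀ R (1 / ((k : ℝ) + 1)) x)
      Filter.atTop (nhds (u x - v x)) := by
    intro x
    by_cases hxb : x ∈ ball x₀ R
    · simpa using (cut_tendsto hp hxb).const_mul (u x - v x)
    · simp [h.veq x hxb]
  unfold HH
  exact ((hx z.1).sub (hx z.2)).const_mul _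

/-- Dominating function on `B × B`. -/
def dom (p : ℝ) (x₀ : EuclideanSpace ℝ (Fin n)) (R : ℝ) (u v : EuclideanSpace ℝ (Fin n) → ℝ)
    (z : EuclideanSpace ℝ (Fin n) × EuclideanSpace ℝ (Fin n)) : ℝ :=
  (|u z.1 - u z.2| ^ p + |v z.1 - v z.2| ^ p) + 2 * (4 * |(u z.1 - v z.1) - (u z.2 - v z.2)| ^ p +
    4 * (p / (p - 1)) ^ p *
      ((1 * |u z.1 - v z.1| ^ p) * (min 1 (dist z.1 z.2 / (R - dist z.1 x₀))) ^ p +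
       (1 * |u z.2 - v z.2| ^ p) * (min 1 (dist z.2 z.1 / (R - dist z.2 x₀))) ^ p))

lemma CData.dom_fin (h : CData n s p x₀ R f u v) {C c : ℝ} (hC : KerUp n s p C) (hC0 : 0 < C)
    (hc : KerLow n s p c) (hc0 : 0 < c)
    (hp : 1 < p) (hp2 : p ≤ 2) (hs : 0 < s) :
    ∫⁻ z in ball x₀ R ×ˢ ball x₀ R, ENNReal.ofReal (dom p x₀ R u v z) ∂(nu n s p) < ⊤ := by
  have hum := h.um
  have hvm := h.vm
  have hB : MeasurableSet (ball x₀ R) := measurableSet_ball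
  have hX := h.X_fin hC hC0 hc hc0 hp hp2 hs
  set T : EuclideanSpace ℝ (Fin n) × EuclideanSpace ℝ (Fin n) → ℝ≥0∞ := fun z =>
    ENNReal.ofReal ((1 * |u z.1 - v z.1| ^ p)) *
      ENNReal.ofReal ((min 1 (dist z.1 z.2 / (R - dist z.1 x₀))) ^ p) with hT
  have hTm : Measurable T := by rw [hT]; fun_prop
  have hTb : ∫⁻ z in ball x₀ R ×ˢ ball x₀ R, T z ∂(nu n s p) < ⊤ :=
    lt_of_le_of_lt (T_bound hC hC0 hB (g := fun _ => 1) (w := fun x => u x - v x) (by fun_prop)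
      (by fun_prop)) (ENNReal.mul_lt_top ENNReal.ofReal_lt_top hX)
  have hTs : ∫⁻ z in ball x₀ R ×ˢ ball x₀ R, T z.swap ∂(nu n s p) < ⊤ := by
    rwa [← nu_swap hB hB hTm]
  have gu := h.ugB
  have gv := h.vg
  have gw := h.wg hp hp2
  rw [gag_eq hB (by fun_prop)] at gu gv gw
  have hTm' : Measurable (fun z => T (Prod.swap z)) := hTm.comp measurable_swap
  set A := ENNReal.ofReal (4 * (p / (p - 1)) ^ p) with hA
  calc _ ≤ ∫⁻ z in ball x₀ R ×ˢ ball x₀ R, ((ENNReal.ofReal (|u z.1 - u z.2| ^ p) +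
          ENNReal.ofReal (|v z.1 - v z.2| ^ p)) + 2 * (4 * ENNReal.ofReal
            (|(u z.1 - v z.1) - (u z.2 - v z.2)| ^ p) + A * (T z + T z.swap))) ∂(nu n s p) := by
        refine setLIntegral_mono' (hB.prod hB) fun z hz => ?_
        have h1 : ∀ a b : ℝ, ENNReal.ofReal (a + b) ≤ ENNReal.ofReal a + ENNReal.ofReal b :=
          fun a b => ENNReal.ofReal_add_le
        have hq : 0 ≤ 4 * (p / (p - 1)) ^ p := by
          have : 0 < p - 1 := by linarith
          positivity
        unfold dom
        refine (h1 _ _).trans (add_le_add (h1 _ _) ?_)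
        rw [ENNReal.ofReal_mul (by norm_num)]
        refine mul_le_mul' (by norm_num) ((h1 _ _).trans (add_le_add ?_ ?_))
        · rw [ENNReal.ofReal_mul (by norm_num)]; norm_num
        · rw [ENNReal.ofReal_mul hq]
          refine mul_le_mul' le_rfl ((h1 _ _).trans (add_le_add ?_ ?_))
          · rw [ENNReal.ofReal_mul (by positivity)]
          · rw [ENNReal.ofReal_mul (by positivity)]; simp [hT]
    _ < ⊤ := by
        rw [lintegral_add_left (by fun_prop), lintegral_add_left (by fun_prop),
          lintegral_const_mul _ (by fun_prop), lintegral_add_left (by fun_prop),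
          lintegral_const_mul _ (by fun_prop), lintegral_const_mul _ (by fun_prop),
          lintegral_add_left (by fun_prop)]
        refine ENNReal.add_lt_top.2 ⟨ENNReal.add_lt_top.2 ⟨gu, gv⟩, ENNReal.mul_lt_top (by simp)
          (ENNReal.add_lt_top.2 ⟨ENNReal.mul_lt_top (by simp) gw,
            ENNReal.mul_lt_top ENNReal.ofReal_lt_top (ENNReal.add_lt_top.2 ⟨hTb, hTs⟩)⟩)⟩

lemma CData.energy (h : CData n s p x₀ R f u v) {C c : ℝ} (hC : KerUp n s p C) (hC0 : 0 < C)
    (hc : KerLow n s p c) (hc0 : 0 < c)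
    (hp : 1 < p) (hp2 : p ≤ 2) (hs : 0 < s) :
    ∫⁻ z, ENNReal.ofReal (HH p u v (fun x => u x - v x) z) ∂(nu n s p) ≤
      ∫⁻ x in ball x₀ R, ENNReal.ofReal (|f x| * |u x - v x|) := by
  have hum := h.um
  have hvm := h.vm
  have hp1 : 0 < p - 1 := by linarith
  have hB : MeasurableSet (ball x₀ R) := measurableSet_ball
  have hdm : Measurable (dom p x₀ R u v) := by unfold dom; fun_prop
  have hBB := hB.prod hB
  have hd0 : ∀ z ∈ ball x₀ R ×ˢ ball x₀ R, 0 ≤ dom p x₀ R u v z := by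
    rintro z ⟨h1, h2⟩
    rw [mem_ball] at h1 h2
    have h1' : 0 ≤ R - dist z.1 x₀ := by linarith
    have h2' : 0 ≤ R - dist z.2 x₀ := by linarith
    unfold dom; positivity
  refine fatou_gen (H := fun k : ℕ => HH p u v
      (fun x => (u x - v x) * cut p x₀ R (1 / ((k : ℝ) + 1)) x))
    (g := (ball x₀ R ×ˢ ball x₀ R).indicator (dom p x₀ R u v))
    (fun k => (h.test hC hC0 hp hp2 hs (by positivity)).1)
    (fun k => HH_meas hum hvm (by have := cut_meas p x₀ R (1 / ((k : ℝ) + 1)); fun_prop))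
    (h.fw hp hp2) (fun k => (h.test hC hC0 hp hp2 hs (by positivity)).2)
    (hdm.indicator hBB) (fun z => indicator_nonneg hd0 z) ?_ ?_ ?_
    (HH_meas hum hvm (by fun_prop)) (h.HH_lim hp)
  · have e : ∀ z, ENNReal.ofReal ((ball x₀ R ×ˢ ball x₀ R).indicator (dom p x₀ R u v) z) =
        (ball x₀ R ×ˢ ball x₀ R).indicator (fun z => ENNReal.ofReal (dom p x₀ R u v z)) z := by
      intro z
      by_cases hz : z ∈ ball x₀ R ×ˢ ball x₀ R
      · simp only [indicator_of_mem hz]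
      · simp only [indicator_of_notMem hz, ENNReal.ofReal_zero]
    simp only [e]
    rw [lintegral_indicator hBB]
    exact h.dom_fin hC hC0 hc hc0 hp hp2 hs
  · intro k z
    have hε : (0:ℝ) < 1 / ((k : ℝ) + 1) := by positivity
    by_cases hz : z ∈ ball x₀ R ×ˢ ball x₀ R
    · rw [indicator_of_mem hz]
      refine le_trans ?_ (neg_abs_le _)
      refine neg_le_neg ((HH_abs_le hp one_pos z).trans ?_)
      have h1 := phi_diff hp hp2 hε (fun x => u x - v x) hz.1 hz.2
      have hz1 : 0 ≤ R - dist z.1 x₀ := by have := hz.1; rw [mem_ball] at this; linarith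
      have hz2 : 0 ≤ R - dist z.2 x₀ := by have := hz.2; rw [mem_ball] at this; linarith
      unfold dom
      rw [Real.one_rpow, one_mul, mul_one]
      have h2 : ∀ x, cut p x₀ R (1 / ((k : ℝ) + 1)) x ≤ 1 := fun x => ecut_le_one hp hε _
      refine add_le_add le_rfl (mul_le_mul_of_nonneg_left (h1.trans ?_) (by norm_num))
      gcongr
      · exact h2 _
      · exact h2 _
    · rw [indicator_of_notMem hz, neg_zero]
      exact h.HH_off hp hp2 hε z hz
  · intro z
    have := mono_nonneg hp hp2 (u z.1 - u z.2) (v z.1 - v z.2)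
    refine this.trans (le_of_eq ?_)
    simp only [HH]; ring

/-- The constant. -/
def cst (p c : ℝ) : ℝ :=
  2 * (3 / (p - 1)) ^ (p / (p - 1)) * (1 / 2) ^ (-((2 - p) / (p - 1))) * (2 / c) ^ (1 / (p - 1))

lemma const_mu {c δ s R p : ℝ} (hp : 1 < p) (hc : 0 < c) (hδ : 0 < δ) (hR : 0 < R) :
    ∃ μ : ℝ, 0 < μ ∧
      3 / (p - 1) * (δ / 2) ^ (-((2 - p) / p)) * μ ^ (-(p - 1)) * (R ^ (s * p) / c) = 1 / 2 ∧
      2 * (3 / (p - 1) * (δ / 2) ^ (-((2 - p) / p)) * μ) =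
        cst p c * δ ^ (-((2 - p) / (p - 1))) * R ^ (s * (p / (p - 1))) := by
  have hp1 : 0 < p - 1 := by linarith
  have hp0 : 0 < p := by linarith
  set L := 3 / (p - 1) * (δ / 2) ^ (-((2 - p) / p)) with hL
  have hLp : 0 < L := by positivity
  have hR' : 0 < R ^ (s * p) := by positivity
  refine ⟨(2 / c * L) ^ (1 / (p - 1)) * (R ^ (s * p)) ^ (1 / (p - 1)), by positivity, ?_, ?_⟩
  · rw [Real.mul_rpow (by positivity) (by positivity), ← Real.rpow_mul (by positivity),
      ← Real.rpow_mul (by positivity),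
      show 1 / (p - 1) * -(p - 1) = -1 by field_simp, Real.rpow_neg_one, Real.rpow_neg_one]
    field_simp
  · rw [Real.mul_rpow (by positivity) hLp.le, ← Real.rpow_mul hR.le]
    have e1 : L * L ^ (1 / (p - 1)) = (3 / (p - 1)) ^ (p / (p - 1)) *
        ((1 / 2) ^ (-((2 - p) / (p - 1))) * δ ^ (-((2 - p) / (p - 1)))) := by
      rw [← Real.mul_rpow (by norm_num) hδ.le]
      have : L * L ^ (1 / (p - 1)) = L ^ (p / (p - 1)) := by
        nth_rw 1 [← Real.rpow_one L]
        rw [← Real.rpow_add hLp]; congr 1; field_simp; ring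
      rw [this, hL, Real.mul_rpow (by positivity) (by positivity), ← Real.rpow_mul (by positivity)]
      congr 2
      · ring
      · field_simp
    rw [cst, show s * p * (1 / (p - 1)) = s * (p / (p - 1)) by ring]
    linear_combination (2 * (2 / c) ^ (1 / (p - 1)) * R ^ (s * (p / (p - 1)))) * e1

lemma CData.concl (h : CData n s p x₀ R f u v) {C c : ℝ} (hC : KerUp n s p C) (hC0 : 0 < C)
    (hc : KerLow n s p c) (hc0 : 0 < c)
    (hp : 1 < p) (hp2 : p ≤ 2) (hs : 0 < s) {δ : ℝ} (hδ : 0 < δ) (hδ1 : δ ≤ 1) :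
    gagliardoE n s p (ball x₀ (2 * R)) (fun x => u x - v x) ≤
      ENNReal.ofReal δ * gagliardoE n s p (ball x₀ (2 * R)) u +
        ENNReal.ofReal (cst p c * δ ^ (-((2 - p) / (p - 1))) * R ^ (s * (p / (p - 1)))) *
          ∫⁻ x in ball x₀ R, ENNReal.ofReal (|f x| ^ (p / (p - 1))) := by
  have hum := h.um
  have hvm := h.vm
  have hR := h.hR
  have hp1 : 0 < p - 1 := by linarith
  have hp0 : 0 < p := by linarith
  have hB : MeasurableSet (ball x₀ R) := measurableSet_ball
  have hB2 : MeasurableSet (ball x₀ (2 * R)) := measurableSet_ball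
  obtain ⟨μ, hμ, hμ1, hμ2⟩ := const_mu (s := s) hp hc0 hδ hR
  set L := 3 / (p - 1) * (δ / 2) ^ (-((2 - p) / p)) with hL
  have hLp : 0 < L := by positivity
  set a := ∫⁻ x in ball x₀ R, ENNReal.ofReal (|f x| * |u x - v x|) with ha
  have haf : a < ⊤ := h.fw hp hp2
  set F := ∫⁻ x in ball x₀ R, ENNReal.ofReal (|f x| ^ (p / (p - 1))) with hF
  set P := ∫⁻ x in ball x₀ R, ENNReal.ofReal (|u x - v x| ^ p) with hP
  set W := gagliardoE n s p (ball x₀ (2 * R)) (fun x => u x - v x) with hW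
  set G2 := gagliardoE n s p (ball x₀ (2 * R)) u with hG2
  have hHm : Measurable (HH p u v (fun x => u x - v x)) := HH_meas hum hvm (by fun_prop)
  have s1 : W ≤ ENNReal.ofReal (δ / 2) * G2 + ENNReal.ofReal L * a := by
    calc W = ∫⁻ z in ball x₀ (2 * R) ×ˢ ball x₀ (2 * R),
          ENNReal.ofReal (|u z.1 - v z.1 - (u z.2 - v z.2)| ^ p) ∂(nu n s p) := by
          rw [hW, gag_eq hB2 (by fun_prop)]
      _ ≤ ∫⁻ z in ball x₀ (2 * R) ×ˢ ball x₀ (2 * R),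
          (ENNReal.ofReal (δ / 2) * ENNReal.ofReal (|u z.1 - u z.2| ^ p) +
            ENNReal.ofReal L * ENNReal.ofReal (HH p u v (fun x => u x - v x) z)) ∂(nu n s p) := by
          refine lintegral_mono fun z => ?_
          simp only
          rw [← ENNReal.ofReal_mul (by positivity), ← ENNReal.ofReal_mul hLp.le]
          refine (ENNReal.ofReal_le_ofReal ?_).trans ENNReal.ofReal_add_le
          have k := key_ptwise hp hp2 (half_pos hδ) (by linarith) (u z.1 - u z.2) (v z.1 - v z.2)
          have e : u z.1 - u z.2 - (v z.1 - v z.2) = u z.1 - v z.1 - (u z.2 - v z.2) := by ring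
          rw [e] at k
          exact k
      _ = ENNReal.ofReal (δ / 2) * G2 + ENNReal.ofReal L *
          ∫⁻ z in ball x₀ (2 * R) ×ˢ ball x₀ (2 * R),
            ENNReal.ofReal (HH p u v (fun x => u x - v x) z) ∂(nu n s p) := by
          rw [lintegral_add_left (by fun_prop), lintegral_const_mul _ (by fun_prop),
            lintegral_const_mul _ (by fun_prop), hG2, gag_eq hB2 hum]
      _ ≤ _ := by
          gcongr
          exact (setLIntegral_le_lintegral _ _).trans (h.energy hC hC0 hc hc0 hp hp2 hs)
  have hWf : W < ⊤ := lt_of_le_of_lt s1 (ENNReal.add_lt_top.2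
    ⟨ENNReal.mul_lt_top ENNReal.ofReal_lt_top h.ug, ENNReal.mul_lt_top ENNReal.ofReal_lt_top haf⟩)
  have s2 : P ≤ ENNReal.ofReal (R ^ (s * p) / c) * W := by
    have k1 := low_bound (x₀ := x₀) (R := R) hc hc0 (g := fun _ => 1) (w := fun x => u x - v x)
      (by fun_prop) (by fun_prop)
    have k2 : ∫⁻ z in ball x₀ R ×ˢ (ball x₀ (2 * R) \ ball x₀ R),
        ENNReal.ofReal (1 * |u z.1 - v z.1| ^ p) ∂(nu n s p) ≤ W := by
      rw [hW, gag_eq hB2 (by fun_prop)]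
      calc _ ≤ ∫⁻ z in ball x₀ R ×ˢ (ball x₀ (2 * R) \ ball x₀ R),
            ENNReal.ofReal (|u z.1 - v z.1 - (u z.2 - v z.2)| ^ p) ∂(nu n s p) := by
            refine setLIntegral_mono' (hB.prod (hB2.diff hB)) ?_
            rintro z ⟨h1, h2, h3⟩
            rw [h.veq _ h3, sub_self, sub_zero, one_mul]
        _ ≤ _ := lintegral_mono_set
            (prod_mono (ball_subset_ball (by linarith)) sdiff_subset)
    have k3 : P ≤ ENNReal.ofReal (R ^ (s * p)) *
        Xw s p x₀ R (fun _ => 1) (fun x => u x - v x) := by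
      rw [Xw, ← lintegral_const_mul _ (by fun_prop)]
      refine setLIntegral_mono' hB fun x hx => ?_
      rw [mem_ball] at hx
      have hd : 0 < R - dist x x₀ := by linarith
      rw [← ENNReal.ofReal_mul (by positivity), ← ENNReal.ofReal_mul (by positivity)]
      refine ENNReal.ofReal_le_ofReal ?_
      have : 1 ≤ R ^ (s * p) * (R - dist x x₀) ^ (-(s * p)) := by
        rw [Real.rpow_neg hd.le, ← div_eq_mul_inv, one_le_div (by positivity)]
        exact Real.rpow_le_rpow hd.le (by linarith [dist_nonneg (x := x) (y := x₀)]) (by positivity)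
      have hh : 0 ≤ |u x - v x| ^ p := by positivity
      nlinarith [mul_le_mul_of_nonneg_left this hh]
    calc P ≤ _ := k3
      _ = ENNReal.ofReal (R ^ (s * p) / c) *
          (ENNReal.ofReal c * Xw s p x₀ R (fun _ => 1) (fun x => u x - v x)) := by
          rw [← mul_assoc, ← ENNReal.ofReal_mul (by positivity), div_mul_cancel₀ _ hc0.ne']
      _ ≤ _ := by gcongr; exact k1.trans k2
  have s3 : a ≤ ENNReal.ofReal μ * F + ENNReal.ofReal (μ ^ (-(p - 1))) * P :=
    fw_le hp hμ h.fm (hum.sub hvm)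
  have s4 : ENNReal.ofReal 1 * W ≤ (ENNReal.ofReal (δ / 2) * G2 + ENNReal.ofReal (L * μ) * F) +
      ENNReal.ofReal (1 / 2) * W := by
    rw [ENNReal.ofReal_one, one_mul]
    calc W ≤ _ := s1
      _ ≤ ENNReal.ofReal (δ / 2) * G2 + ENNReal.ofReal L * (ENNReal.ofReal μ * F +
          ENNReal.ofReal (μ ^ (-(p - 1))) * (ENNReal.ofReal (R ^ (s * p) / c) * W)) := by
          gcongr
          exact s3.trans (by gcongr)
      _ = _ := by
          rw [← hμ1, ENNReal.ofReal_mul (q := R ^ (s * p) / c) (by positivity),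
            ENNReal.ofReal_mul (q := μ ^ (-(p - 1))) hLp.le,
            ENNReal.ofReal_mul (q := μ) hLp.le]
          ring
  refine (absorb one_pos le_rfl hWf s4).trans (le_of_eq ?_)
  rw [← hμ2, ENNReal.ofReal_mul (q := L * μ) (by norm_num), div_eq_mul_inv,
    ← ENNReal.ofReal_inv_of_pos (by norm_num), show ((1:ℝ) / 2)⁻¹ = 2 by norm_num,
    show ENNReal.ofReal δ = ENNReal.ofReal 2 * ENNReal.ofReal (δ / 2) by
      rw [← ENNReal.ofReal_mul (by norm_num)]; congr 1; ring]
  ring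

end

lemma cst_pos {p c : ℝ} (hp : 1 < p) (hc : 0 < c) : 0 < cst p c := by
  have : 0 < p - 1 := by linarith
  unfold cst; positivity

lemma gag_congr {n : ℕ} {s p : ℝ} {D : Set (EuclideanSpace ℝ (Fin n))}
    {u v : EuclideanSpace ℝ (Fin n) → ℝ} (h : ∀ᵐ x, u x = v x) :
    gagliardoE n s p D u = gagliardoE n s p D v := by
  unfold gagliardoE
  refine lintegral_congr_ae ?_
  filter_upwards [ae_restrict_of_ae h] with x hx
  refine lintegral_congr_ae ?_
  filter_upwards [ae_restrict_of_ae h] with y hy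
  rw [hx, hy]

open Classical in
lemma mk_data {n : ℕ} {s p : ℝ} {Ω : Set (EuclideanSpace ℝ (Fin n))}
    {f u v : EuclideanSpace ℝ (Fin n) → ℝ} {x₀ : EuclideanSpace ℝ (Fin n)} {R : ℝ}
    (hΩ : MeasurableSet Ω) (hf : MemLploc n (p / (p - 1)) Ω f) (hR : 0 < R) (hsub : closedBall x₀ (2 * R) ⊆ Ω)
    (hu : IsLocalWeakSolution n p s Ω f u)
    (hv : IsLocalWeakSolution n p s (ball x₀ R) (fun _ => 0) v)
    (hvp : (∫⁻ x in ball x₀ R, ENNReal.ofReal (|v x| ^ p)) < ⊤)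
    (hvg : gagliardoE n s p (ball x₀ R) v < ⊤)
    (hvu : ∀ᵐ x, x ∉ ball x₀ R → v x = u x) :
    ∃ v', (∀ᵐ x, v' x = v x) ∧ CData n s p x₀ R f u v' := by
  obtain ⟨um, uK, ut, uw⟩ := hu
  obtain ⟨vm, vK, vt, vw⟩ := hv
  have hae : ∀ᵐ x, (ball x₀ R).piecewise v u x = v x := by
    filter_upwards [hvu] with x hx
    by_cases hxb : x ∈ ball x₀ R
    · simp only [piecewise_eq_of_mem _ _ _ hxb]
    · simp only [piecewise_eq_of_notMem _ _ _ hxb, hx hxb]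
  refine ⟨(ball x₀ R).piecewise v u, hae, ?_⟩
  set v' := (ball x₀ R).piecewise v u with hv'
  have hB1 : ball x₀ R ⊆ closedBall x₀ (2 * R) :=
    ball_subset_closedBall.trans (closedBall_subset_closedBall (by linarith))
  have hK := isCompact_closedBall x₀ (2 * R)
  refine ⟨hR, um, vm.piecewise measurableSet_ball um, hf.1,
    fun x hx => piecewise_eq_of_notMem _ _ _ hx, ?_, ?_, ?_, ?_, ut, ?_, ?_, ?_⟩
  · exact lt_of_le_of_lt (lintegral_mono_set hB1) (uK _ hsub hK).1
  · rw [lintegral_congr_ae (g := fun x => ENNReal.ofReal (|v x| ^ p))]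
    · exact hvp
    · filter_upwards [ae_restrict_of_ae hae] with x hx
      rw [hx]
  · exact lt_of_le_of_lt (gag_mono ball_subset_closedBall u) (uK _ hsub hK).2
  · rwa [gag_congr hae]
  · rw [lintegral_congr_ae (g := fun x => ENNReal.ofReal (|v x| ^ (p - 1) /
      (1 + ‖x‖) ^ ((n : ℝ) + s * p)))]
    · exact vt
    · filter_upwards [hae] with x hx
      rw [hx]
  · exact lt_of_le_of_lt (lintegral_mono_set hB1) (hf.2 _ hsub hK)
  · rintro φ hφ ⟨ε, hε, h0⟩ hφp hφg
    have hz : ∀ x, x ∉ closedBall x₀ (R - ε) → φ x = 0 := by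
      intro x hx
      rw [mem_closedBall, not_le] at hx
      exact h0 x (by linarith)
    have hKB : closedBall x₀ (R - ε) ⊆ ball x₀ R := closedBall_subset_ball (by linarith)
    constructor
    · rw [uw φ hφ ⟨closedBall x₀ (R - ε), isCompact_closedBall _ _,
        hKB.trans (hB1.trans hsub), Filter.Eventually.of_forall hz⟩ hφp hφg]
      refine setIntegral_eq_of_subset_of_forall_sdiff_eq_zero ?_ (hB1.trans hsub) ?_
      · exact hΩ
      · rintro x ⟨_, hx⟩
        rw [hz x (fun h => hx (hKB h)), mul_zero]
    · have := vw φ hφ ⟨closedBall x₀ (R - ε), isCompact_closedBall _ _,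
        hKB, Filter.Eventually.of_forall hz⟩ hφp hφg
      simp only [zero_mul, integral_zero] at this
      rw [← this]
      refine integral_congr_ae ?_
      filter_upwards [hae] with x hx
      refine integral_congr_ae ?_
      filter_upwards [hae] with y hy
      rw [hx, hy]

end CompFrac

theorem comparison_fractional_seminorm_subquadratic (n : ℕ) (p s : ℝ) (hp₁ : 1 < p) (hp₂ : p ≤ 2)
    (hs₁ : 0 < s) (hs₂ : s < 1) :
    ∃ c : ℝ, 0 < c ∧
      ∀ (Ω : Set (EuclideanSpace ℝ (Fin n))) (f u v : EuclideanSpace ℝ (Fin n) → ℝ)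
        (x₀ : EuclideanSpace ℝ (Fin n)) (R : ℝ),
        IsOpen Ω → Bornology.IsBounded Ω →
        MemLploc n (p / (p - 1)) Ω f →
        0 < R → closedBall x₀ (2 * R) ⊆ Ω →
        IsLocalWeakSolution n p s Ω f u →
        IsLocalWeakSolution n p s (ball x₀ R) (fun _ => 0) v →
        (∫⁻ x in ball x₀ R, ENNReal.ofReal (|v x| ^ p)) < ⊤ →
        gagliardoE n s p (ball x₀ R) v < ⊤ →
        (∀ᵐ x, x ∉ ball x₀ R → v x = u x) →
        ∀ δ : ℝ, 0 < δ → δ ≤ 1 →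
          gagliardoE n s p (ball x₀ (2 * R)) (fun x => u x - v x) ≤
            ENNReal.ofReal δ * gagliardoE n s p (ball x₀ (2 * R)) u +
              ENNReal.ofReal (c * δ ^ (-((2 - p) / (p - 1))) * R ^ (s * (p / (p - 1)))) *
                ∫⁻ x in ball x₀ R, ENNReal.ofReal (|f x| ^ (p / (p - 1))) := by
  rcases Nat.eq_zero_or_pos n with rfl | hn
  · refine ⟨1, one_pos, ?_⟩
    intro Ω f u v x₀ R _ _ _ _ _ _ _ _ _ _ δ _ _
    have : gagliardoE 0 s p (ball x₀ (2 * R)) (fun x => u x - v x) = 0 := by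
      unfold gagliardoE
      have e : ∀ x y : EuclideanSpace ℝ (Fin 0),
          ENNReal.ofReal (|u x - v x - (u y - v y)| ^ p / dist x y ^ (((0 : ℕ) : ℝ) + s * p)) = 0 := by
        intro x y
        rw [Subsingleton.elim y x, sub_self, abs_zero, Real.zero_rpow (by linarith), zero_div,
          ENNReal.ofReal_zero]
      simp only [e, lintegral_zero]
    rw [this]
    exact zero_le
  · obtain ⟨C, hC0, hC⟩ := CompFrac.ker_upper n hn p s hp₁ hs₁ hs₂
    obtain ⟨c, hc0, hc⟩ := CompFrac.ker_lower n hn p s hp₁ hs₁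
    refine ⟨CompFrac.cst p c, CompFrac.cst_pos hp₁ hc0, ?_⟩
    intro Ω f u v x₀ R hΩ _ hf hR hsub hu hv hvp hvg hvu δ hδ hδ1
    obtain ⟨v', hae, hd⟩ := CompFrac.mk_data hΩ.measurableSet hf hR hsub hu hv hvp hvg hvu
    rw [← CompFrac.gag_congr (u := fun x => u x - v' x)]
    · exact hd.concl hC hC0 hc hc0 hp₁ hp₂ hs₁ hδ hδ1
    · filter_upwards [hae] with x hx
      rw [hx]
end
end

section
/- Let p∈(1,2). There exists a constant c = c(p) such that for every δ∈(0,1/4] and all A,B∈ℝ one has |A−B|^p ≤ 16 δ |A|^p + c δ^{−(2−p)/p} (𝐀^{p−1} − 𝐁^{p−1})(A−B), where 𝐭^{p−1} := |t|^{p−2}t for t ≠ 0 and 𝐭^{p−1} := 0 for t = 0. (Note that the factor (𝐀^{p−1}−𝐁^{p−1})(A−B) is nonnegative by monotonicity of t ↦ 𝐭^{p−1}.) -/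
open MeasureTheory Metric Set
open scoped ENNReal

noncomputable section

theorem aux_pos (q x y M : ℝ) (hq : 0 < q) (hq1 : q < 1) (hy : 0 ≤ y) (hyx : y ≤ x)
    (hxM : x ≤ M) : q * M ^ (q - 1) * (x - y) ≤ sgnPow q x - sgnPow q y := by
  have hS : ∀ t : ℝ, 0 ≤ t → sgnPow q t = t ^ q := by
    intro t ht
    unfold sgnPow
    rw [abs_of_nonneg ht]
    rcases ht.eq_or_lt with h | h
    · rw [← h, Real.zero_rpow hq.ne']; simp
    · rw [Real.rpow_sub_one h.ne']; field_simp
  have hx0 : 0 ≤ x := hy.trans hyx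
  rw [hS x hx0, hS y hy]
  rcases hx0.eq_or_lt with h | hx
  · have : y = 0 := by linarith
    simp [← h, this]
  have hB := rpow_one_add_le_one_add_mul_self (s := y / x - 1) (p := q)
    (by have := div_nonneg hy hx.le; linarith) hq.le hq1.le
  have e1 : 1 + (y / x - 1) = y / x := by ring
  rw [e1, Real.div_rpow hy hx.le, div_le_iff₀ (Real.rpow_pos_of_pos hx q)] at hB
  have e2 : (1 + q * (y / x - 1)) * x ^ q = x ^ q - q * x ^ (q - 1) * (x - y) := by
    rw [Real.rpow_sub_one hx.ne']; field_simp; ring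
  have hm : M ^ (q - 1) ≤ x ^ (q - 1) :=
    Real.rpow_le_rpow_of_nonpos hx hxM (by linarith)
  have : q * M ^ (q - 1) * (x - y) ≤ q * x ^ (q - 1) * (x - y) := by
    have : 0 ≤ x - y := by linarith
    gcongr
  linarith

theorem sgnPow_neg' (q x : ℝ) : sgnPow q (-x) = - sgnPow q x := by
  unfold sgnPow; rw [abs_neg]; ring

theorem aux_le (q x y M : ℝ) (hq : 0 < q) (hq1 : q < 1) (hyx : y ≤ x)
    (hxM : |x| ≤ M) (hyM : |y| ≤ M) :
    q * M ^ (q - 1) * (x - y) ≤ sgnPow q x - sgnPow q y := by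
  rw [abs_le] at hxM hyM
  rcases le_total 0 y with hy | hy
  · exact aux_pos q x y M hq hq1 hy hyx hxM.2
  rcases le_total 0 x with hx | hx
  · have h1 := aux_pos q x 0 M hq hq1 le_rfl hx hxM.2
    have h2 := aux_pos q (-y) 0 M hq hq1 le_rfl (by linarith) (by linarith)
    have h0 : sgnPow q 0 = 0 := by simp [sgnPow]
    rw [sgnPow_neg'] at h2
    rw [h0] at h1 h2
    linarith
  · have h2 := aux_pos q (-y) (-x) M hq hq1 (by linarith) (by linarith) (by linarith)
    rw [sgnPow_neg', sgnPow_neg'] at h2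
    linarith

theorem aux_mul (q x y M : ℝ) (hq : 0 < q) (hq1 : q < 1)
    (hxM : |x| ≤ M) (hyM : |y| ≤ M) :
    q * M ^ (q - 1) * |x - y| ^ 2 ≤ (sgnPow q x - sgnPow q y) * (x - y) := by
  rw [sq_abs]
  rcases le_total y x with h | h
  · have := mul_le_mul_of_nonneg_right (aux_le q x y M hq hq1 h hxM hyM) (sub_nonneg.2 h)
    linarith
  · have := mul_le_mul_of_nonneg_right (aux_le q y x M hq hq1 h hyM hxM) (sub_nonneg.2 h)
    linarith

theorem subquadratic_algebraic_inequality (p : ℝ) (hp₁ : 1 < p) (hp₂ : p < 2) :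
    ∃ c : ℝ, 0 < c ∧
      ∀ δ A B : ℝ, 0 < δ → δ ≤ 1 / 4 →
        |A - B| ^ p ≤
          16 * δ * |A| ^ p +
            c * δ ^ (-((2 - p) / p)) *
              ((sgnPow (p - 1) A - sgnPow (p - 1) B) * (A - B)) := by
  have hq : 0 < p - 1 := by linarith
  have hc : 0 < 3 ^ (2 - p) / (p - 1) := by positivity
  refine ⟨3 ^ (2 - p) / (p - 1), hc, ?_⟩
  intro δ A B hδ hδ4
  have hp0 : 0 < p := by linarith
  set ε := δ ^ (1 / p) with hε
  have hε0 : 0 < ε := Real.rpow_pos_of_pos hδ _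
  have hε1 : ε ≤ 1 := Real.rpow_le_one hδ.le (by linarith) (by positivity)
  have hεp : ε ^ p = δ := by
    rw [hε, ← Real.rpow_mul hδ.le, one_div_mul_cancel hp0.ne', Real.rpow_one]
  have hεe : δ ^ (-((2 - p) / p)) = ε ^ (p - 2) := by
    rw [hε, ← Real.rpow_mul hδ.le]; congr 1; ring
  rw [hεe]
  have hAp : 0 ≤ δ * |A| ^ p := by positivity
  have hM : ∀ M, |A| ≤ M → |B| ≤ M → _ := fun M => aux_mul (p - 1) A B M hq (by linarith)
  set P := (sgnPow (p - 1) A - sgnPow (p - 1) B) * (A - B) with hP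
  rcases le_or_gt |A - B| (ε * |A|) with h | h
  · have hP0 : 0 ≤ P := by
      refine le_trans ?_ (hM (|A| + |B|) (by linarith [abs_nonneg B]) (by linarith [abs_nonneg A]))
      positivity
    have h1 : |A - B| ^ p ≤ δ * |A| ^ p := by
      rw [← hεp, ← Real.mul_rpow hε0.le (abs_nonneg A)]
      exact Real.rpow_le_rpow (abs_nonneg _) h hp0.le
    have : 0 ≤ 3 ^ (2 - p) / (p - 1) * ε ^ (p - 2) * P := by positivity
    linarith
  · set D := |A - B| with hD
    have hD0 : 0 < D := lt_of_le_of_lt (by positivity) h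
    have hA : |A| ≤ D / ε := by rw [le_div_iff₀ hε0]; linarith
    have hDε : D ≤ D / ε := by rw [le_div_iff₀ hε0]; nlinarith
    have hB : |B| ≤ |A| + D := by
      have := abs_sub_abs_le_abs_sub B A
      rw [abs_sub_comm] at this; linarith
    have hk := hM (3 * (D / ε)) (by linarith) (by linarith)
    have e : D ^ p = 3 ^ (2 - p) / (p - 1) * ε ^ (p - 2) *
        ((p - 1) * (3 * (D / ε)) ^ (p - 1 - 1) * D ^ 2) := by
      have e1 : p - 1 - 1 = p - 2 := by ring
      have e2 : (3 : ℝ) ^ (2 - p) = (3 ^ (p - 2))⁻¹ := by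
        rw [← Real.rpow_neg (by norm_num)]; congr 1; ring
      have e3 : D ^ p = D ^ (p - 2) * D ^ 2 := by
        rw [← Real.rpow_natCast D 2, ← Real.rpow_add hD0]; congr 1; push_cast; ring
      have h3 : (0 : ℝ) < 3 ^ (p - 2) := by positivity
      have h4 : 0 < ε ^ (p - 2) := by positivity
      rw [e1, e2, e3, Real.mul_rpow (by norm_num) (by positivity), Real.div_rpow hD0.le hε0.le]
      field_simp
    have : D ^ p ≤ 3 ^ (2 - p) / (p - 1) * ε ^ (p - 2) * P := by
      rw [e]
      exact mul_le_mul_of_nonneg_left hk (by positivity)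
    linarith
end
end
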